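/- arXiv:2108.00717 — 3 statements merged into one kernel-verified Lean document; each statement's English description precedes it below -/
import Mathlib

section
/- Let g ≥ 2 and let Y be an at-most two-dimensional CW-complex with an assignment of both a direction and a label in {a_1, b_1, …, a_g, b_g} to each edge. Then Y is a tiled surface (i.e., Y embeds as a subcomplex of a covering space of Σ_g compatibly with labels and directions) if and only if Y satisfies: (P1) every vertex of Y has at most one incoming ℓ-labeled edge and at most one outgoing ℓ-labeled edge for each label ℓ ∈ {a_1, b_1, …, a_g, b_g}; (P2) every path in the 1-skeleton Y^(1) reading a word in {a_1^{±1}, …, b_g^{±1}} which equals the identity in Γ_g is closed; (P3) every 2-cell of Y is a 4g-gon glued along a closed path reading the relation [a_1,b_1]⋯[a_g,b_g], and every such closed path is the boundary of at most one 2-cell. -/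
/-!
Formalization preamble for "Core Surfaces" (Magee–Puder).

We work with a fixed combinatorial (CW) model.  The surface `Σ_g` has one vertex,
`2g` directed labeled edges (the label `2i` plays the role of `a_{i+1}` and `2i+1`
the role of `b_{i+1}`), and one `4g`-gon glued along `[a₁,b₁]⋯[a_g,b_g]`.

* `Gamma g` is the surface group, presented by the single relator.
* A `Complex g` is a combinatorial 2-complex with directed, labeled edges and
  2-cells given by their boundary walks; coverings of `Σ_g` are the complexes in
  which every vertex has exactly one incoming/outgoing edge of each label, every
  walk reading the relator is closed, and every closed walk reading the relator
  bounds exactly one face (`IsCovering`).  A tiled surface is a complex that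
  embeds into such a covering (`IsTiledSurface`).
* Blocks, chains, boundary cycles (via the ribbon structure coming from the fixed
  cyclic order of the `4g` half-edges around a vertex of `Σ_g`), boundary-reduced
  and strongly boundary-reduced surfaces are defined combinatorially.
* Homotopy of edge-walks is the edge-path-group homotopy: backtrack insertions and
  insertions of boundaries of (present) faces.
* `cover g J` is the covering space `J\~Σ_g` of `Σ_g` associated to a subgroup
  `J ≤ Γ_g` (vertices = right cosets), and `coreSub g J` is the core surface of
  `J`, defined exactly as in the paper: the union of all shortest representative
  cycles of essential free-homotopy classes, together with all components of the
  complement containing finitely many `4g`-gons.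
-/

noncomputable section

namespace CS

/-- Signed letters over the generators `a₁,b₁,…,a_g,b_g` of `Γ_g`
(`a_{i+1} ↦ 2i`, `b_{i+1} ↦ 2i+1`); `true` means a positive letter. -/
abbrev Letter (g : ℕ) := Fin (2 * g) × Bool

/-- The label of the `p`-th letter of the relator `[a₁,b₁][a₂,b₂]⋯[a_g,b_g]`. -/
def relLabel (g : ℕ) (p : Fin (4 * g)) : Fin (2 * g) :=
  ⟨2 * ((p : ℕ) / 4) + ((p : ℕ) % 4) % 2, by have := p.2; omega⟩

/-- The sign of the `p`-th letter of the relator. -/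
def relSign (g : ℕ) (p : Fin (4 * g)) : Bool := decide ((p : ℕ) % 4 < 2)

/-- The relator `[a₁,b₁][a₂,b₂]⋯[a_g,b_g]` as a word (list of signed letters). -/
def relatorWord (g : ℕ) : List (Letter g) :=
  (List.finRange (4 * g)).map fun p => (relLabel g p, relSign g p)

/-- The relator as an element of the free group on the `2g` generators. -/
def relatorF (g : ℕ) : FreeGroup (Fin (2 * g)) :=
  ((relatorWord g).map fun l => if l.2 then FreeGroup.of l.1 else (FreeGroup.of l.1)⁻¹).prod

/-- The surface group `Γ_g = ⟨a₁,b₁,…,a_g,b_g ∣ [a₁,b₁]⋯[a_g,b_g]⟩`. -/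
abbrev Gamma (g : ℕ) := PresentedGroup ({relatorF g} : Set (FreeGroup (Fin (2 * g))))

/-- The image of a signed letter in `Γ_g`. -/
def letterG {g : ℕ} (l : Letter g) : Gamma g :=
  if l.2 then PresentedGroup.of l.1 else (PresentedGroup.of l.1)⁻¹

/-- The image of a word in `Γ_g`. -/
def wordG {g : ℕ} (w : List (Letter g)) : Gamma g := (w.map letterG).prod

/-- `ℓ(γ^{Γ_g})`: the minimal length of a word in the generators representing the
conjugacy class of `γ` in `Γ_g`. -/
def conjLen {g : ℕ} (γ : Gamma g) : ℕ :=
  sInf {n | ∃ w : List (Letter g), w.length = n ∧ ∃ x : Gamma g, x * wordG w * x⁻¹ = γ}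

/-! ### Half-edge positions around a vertex of `Σ_g`

The `4g` half-edges around the vertex `o` of `Σ_g` come in the (clockwise) cyclic
order `a₁`-out, `b₁`-in, `a₁`-in, `b₁`-out, `a₂`-out, `b₂`-in, `a₂`-in, `b₂`-out, …
-/

/-- Position of the outgoing `ℓ`-labeled half-edge in the cyclic order. -/
def posOut {g : ℕ} (ℓ : Fin (2 * g)) : ℕ :=
  if (ℓ : ℕ) % 2 = 0 then 2 * (ℓ : ℕ) else 2 * (ℓ : ℕ) + 1

/-- Position of the incoming `ℓ`-labeled half-edge in the cyclic order. -/
def posIn {g : ℕ} (ℓ : Fin (2 * g)) : ℕ :=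
  if (ℓ : ℕ) % 2 = 0 then 2 * (ℓ : ℕ) + 2 else 2 * (ℓ : ℕ) - 1

/-- The position of the half-edge through which a traversal of a dart with signed
letter `s` *arrives* at its terminal vertex. -/
def posArr {g : ℕ} (s : Letter g) : ℕ := if s.2 then posIn s.1 else posOut s.1

/-- The position of the half-edge through which a traversal of a dart with signed
letter `s` *leaves* its initial vertex. -/
def posLv {g : ℕ} (s : Letter g) : ℕ := if s.2 then posOut s.1 else posIn s.1

/-- The number of half-edges strictly between the arrival half-edge of `s` and the
departure half-edge of `t`, in the clockwise cyclic order of the `4g` half-edges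
around a vertex. -/
def gapN {g : ℕ} (s t : Letter g) : ℕ := (posLv t + 4 * g - (posArr s + 1)) % (4 * g)

/-! ### Combinatorial complexes -/

/-- A combinatorial at-most-2-dimensional CW-complex with directed edges labeled by
the generators of `Γ_g`, and 2-cells recorded by their boundary walks (lists of
darts, i.e. edges with a direction of traversal). -/
structure Complex (g : ℕ) where
  V : Type
  E : Type
  F : Type
  src : E → V
  dst : E → V
  lab : E → Fin (2 * g)
  bdry : F → List (E × Bool)

namespace Complex

variable {g : ℕ} (Y : Complex g)

/-- Darts: edges together with a direction of traversal (`true` = forward). -/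
abbrev D := Y.E × Bool

/-- The initial vertex of a dart. -/
def dTail (d : Y.D) : Y.V := if d.2 then Y.src d.1 else Y.dst d.1

/-- The terminal vertex of a dart. -/
def dHead (d : Y.D) : Y.V := if d.2 then Y.dst d.1 else Y.src d.1

/-- The reversal of a dart. -/
def dRev (d : Y.D) : Y.D := (d.1, !d.2)

/-- The signed letter read by a dart. -/
def dLet (d : Y.D) : Letter g := (Y.lab d.1, d.2)

/-- The word read along a list of darts. -/
def wordOf (l : List Y.D) : List (Letter g) := l.map Y.dLet

/-- The reversed walk. -/
def revW (l : List Y.D) : List Y.D := (l.map Y.dRev).reverse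

/-- `WalkFrom u v l` : `l` is a walk (edge-path) from `u` to `v`. -/
inductive WalkFrom : Y.V → Y.V → List Y.D → Prop
  | nil (v : Y.V) : WalkFrom v v []
  | cons (d : Y.D) {v : Y.V} {l : List Y.D} :
      WalkFrom (Y.dHead d) v l → WalkFrom (Y.dTail d) v (d :: l)

/-- All darts of `l` use edges from the set `sE`. -/
def InSet (sE : Set Y.E) (l : List Y.D) : Prop := ∀ d ∈ l, d.1 ∈ sE

/-- Two darts are adjacent (can be traversed consecutively). -/
def adj (d d' : Y.D) : Prop := Y.dHead d = Y.dTail d'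

/-- A nonempty closed walk. -/
def IsCycle (c : List Y.D) : Prop := c ≠ [] ∧ ∃ v, Y.WalkFrom v v c

/-- **P1**: at most one incoming and at most one outgoing `ℓ`-labeled edge at every
vertex, for every label `ℓ`. -/
def P1 : Prop :=
  (∀ e e' : Y.E, Y.src e = Y.src e' → Y.lab e = Y.lab e' → e = e') ∧
  (∀ e e' : Y.E, Y.dst e = Y.dst e' → Y.lab e = Y.lab e' → e = e')

/-- **P2**: every walk reading a word equal to `1` in `Γ_g` is closed. -/
def P2 : Prop :=
  ∀ (u v : Y.V) (l : List Y.D), Y.WalkFrom u v l → wordG (Y.wordOf l) = 1 → u = v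

/-- **P3**: every 2-cell is glued along a closed walk reading the relator
`[a₁,b₁]⋯[a_g,b_g]`, and every such closed walk bounds at most one 2-cell. -/
def P3 : Prop :=
  (∀ f : Y.F, (∃ v, Y.WalkFrom v v (Y.bdry f)) ∧ Y.wordOf (Y.bdry f) = relatorWord g) ∧
  Function.Injective Y.bdry

/-- A combinatorial covering space of `Σ_g`: every vertex has exactly one outgoing
and one incoming edge of each label, every walk reading the relator is closed, and
every closed walk reading the relator bounds exactly one `4g`-gon. -/
def IsCovering : Prop :=
  Y.P1 ∧ Y.P3 ∧
  (∀ (v : Y.V) (ℓ : Fin (2 * g)), ∃ e, Y.src e = v ∧ Y.lab e = ℓ) ∧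
  (∀ (v : Y.V) (ℓ : Fin (2 * g)), ∃ e, Y.dst e = v ∧ Y.lab e = ℓ) ∧
  (∀ (u v : Y.V) (l : List Y.D), Y.WalkFrom u v l → Y.wordOf l = relatorWord g → u = v) ∧
  (∀ (v : Y.V) (l : List Y.D), Y.WalkFrom v v l → Y.wordOf l = relatorWord g →
    ∃ f, Y.bdry f = l)

end Complex

/-- A morphism of labeled complexes: maps cells to cells of the same dimension and
respects sources, targets, labels and face boundaries (equivalently, commutes with
the immersions to `Σ_g`). -/
structure Hom {g : ℕ} (Y Z : Complex g) where
  mV : Y.V → Z.V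
  mE : Y.E → Z.E
  mF : Y.F → Z.F
  hsrc : ∀ e, Z.src (mE e) = mV (Y.src e)
  hdst : ∀ e, Z.dst (mE e) = mV (Y.dst e)
  hlab : ∀ e, Z.lab (mE e) = Y.lab e
  hbdry : ∀ f, Z.bdry (mF f) = (Y.bdry f).map fun d => (mE d.1, d.2)

namespace Hom

variable {g : ℕ} {Y Z : Complex g}

/-- The induced map on darts. -/
def mD (φ : Hom Y Z) (d : Y.D) : Z.D := (φ.mE d.1, d.2)

/-- Injectivity (an embedding of complexes). -/
def Inj (φ : Hom Y Z) : Prop :=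
  Function.Injective φ.mV ∧ Function.Injective φ.mE ∧ Function.Injective φ.mF

end Hom

namespace Complex

variable {g : ℕ} (Y : Complex g)

/-- A tiled surface: a complex which embeds into a combinatorial covering space of
`Σ_g` (compatibly with directions and labels). -/
def IsTiledSurface : Prop :=
  ∃ Z : Complex g, Z.IsCovering ∧ ∃ φ : Hom Y Z, φ.Inj

/-- Connectivity of a complex (any two vertices are joined by a walk). -/
def Connected : Prop := Nonempty Y.V ∧ ∀ v w : Y.V, ∃ l, Y.WalkFrom v w l

/-! ### Blocks and chains -/

/-- A block: a nonempty walk such that successive darts have no half-edges between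
them (hence it reads a subword of the cyclic relator, of length at most `4g`). -/
def IsBlock (l : List Y.D) : Prop :=
  l ≠ [] ∧ l.length ≤ 4 * g ∧
  List.Chain' (fun d d' => Y.adj d d' ∧ gapN (Y.dLet d) (Y.dLet d') = 0) l

/-- Two blocks are consecutive: concatenation is a walk and there is exactly one
half-edge between the last dart of the first and the first dart of the second. -/
def chainStep (b b' : List Y.D) : Prop :=
  ∃ d d', b.getLast? = some d ∧ b'.head? = some d' ∧ Y.adj d d' ∧
    gapN (Y.dLet d) (Y.dLet d') = 1

/-- A chain: a nonempty sequence of consecutive blocks. -/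
def IsChain (bs : List (List Y.D)) : Prop :=
  bs ≠ [] ∧ (∀ b ∈ bs, Y.IsBlock b) ∧ List.Chain' Y.chainStep bs

/-- A cyclic chain: a chain whose blocks pave an entire cycle. -/
def IsCyclicChain (bs : List (List Y.D)) : Prop :=
  Y.IsChain bs ∧ ∃ b b', bs.getLast? = some b ∧ bs.head? = some b' ∧ Y.chainStep b b'

/-- A long chain: a chain of consecutive blocks of lengths `2g, 2g−1, …, 2g−1, 2g`. -/
def IsLongChain (bs : List (List Y.D)) : Prop :=
  Y.IsChain bs ∧ ∃ k, bs.map List.length = 2 * g :: (List.replicate k (2 * g - 1) ++ [2 * g])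

/-- A half-chain: a cyclic chain all of whose blocks have length `2g − 1`. -/
def IsHalfChain (bs : List (List Y.D)) : Prop :=
  Y.IsCyclicChain bs ∧ ∀ b ∈ bs, b.length = 2 * g - 1

/-! ### Boundary cycles of the thick version (relative to sets of present edges and
faces), via the ribbon structure -/

/-- `nextD sE d d'`: among darts (with edge in `sE`) leaving the head of `d`, the
dart `d'` is the first one in clockwise order after the arrival half-edge of `d`.
This is the successor map whose orbits trace the boundary components of the thick
version of the ribbon graph. -/
def nextD (sE : Set Y.E) (d d' : Y.D) : Prop :=
  d'.1 ∈ sE ∧ Y.adj d d' ∧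
  ∀ d'' : Y.D, d''.1 ∈ sE → Y.adj d d'' →
    gapN (Y.dLet d) (Y.dLet d') ≤ gapN (Y.dLet d) (Y.dLet d'')

/-- The corner between the consecutive darts `d, d'` is filled by a face from `sF`. -/
def faceStep (sF : Set Y.F) (d d' : Y.D) : Prop :=
  ∃ f ∈ sF, [d, d'] <:+: (Y.bdry f ++ Y.bdry f)

/-- One step along the boundary of the thick version. -/
def bStep (sE : Set Y.E) (sF : Set Y.F) (d d' : Y.D) : Prop :=
  d.1 ∈ sE ∧ Y.nextD sE d d' ∧ ¬ Y.faceStep sF d d'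

/-- A (finite segment of a) boundary cycle of the thick version. -/
def BPath (sE : Set Y.E) (sF : Set Y.F) (l : List Y.D) : Prop :=
  l ≠ [] ∧ Y.InSet sE l ∧ List.Chain' (Y.bStep sE sF) l

/-- A (finite) boundary cycle of the thick version. -/
def BCycle (sE : Set Y.E) (sF : Set Y.F) (l : List Y.D) : Prop :=
  Y.BPath sE sF l ∧ ∃ d d', l.getLast? = some d ∧ l.head? = some d' ∧ Y.bStep sE sF d d'

/-- A dart lying on the boundary of the thick version. -/
def IsBDart (sE : Set Y.E) (sF : Set Y.F) (d : Y.D) : Prop :=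
  d.1 ∈ sE ∧ ∃ d', Y.nextD sE d d' ∧ ¬ Y.faceStep sF d d'

/-- Boundary reduced: no boundary cycle contains a long block (length `≥ 2g+1`) or
a long chain. -/
def BoundaryReduced (sE : Set Y.E) (sF : Set Y.F) : Prop :=
  (∀ l, Y.BPath sE sF l → ¬ (Y.IsBlock l ∧ 2 * g + 1 ≤ l.length)) ∧
  (∀ bs, Y.IsLongChain bs → ¬ Y.BPath sE sF bs.flatten)

/-- Strongly boundary reduced: no boundary cycle contains a half-block (length
exactly `2g`) or a half-chain. -/
def StronglyBoundaryReduced (sE : Set Y.E) (sF : Set Y.F) : Prop :=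
  (∀ l, Y.BPath sE sF l → ¬ (Y.IsBlock l ∧ l.length = 2 * g)) ∧
  (∀ bs, Y.IsHalfChain bs → ¬ Y.BCycle sE sF bs.flatten)

/-! ### Combinatorial homotopy of walks -/

/-- A closed walk traversing the boundary of a face from `sF` (in either direction,
starting anywhere). -/
def faceLoop (sF : Set Y.F) (b : List Y.D) : Prop :=
  ∃ f ∈ sF, ∃ n, b = (Y.bdry f).rotate n ∨ b = Y.revW ((Y.bdry f).rotate n)

/-- Elementary homotopy move: insertion of a backtrack or of a face boundary. -/
def elemMove (sE : Set Y.E) (sF : Set Y.F) (l l' : List Y.D) : Prop :=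
  (∃ (l₁ l₂ : List Y.D) (d : Y.D), d.1 ∈ sE ∧ l = l₁ ++ l₂ ∧ l' = l₁ ++ d :: Y.dRev d :: l₂) ∨
  (∃ l₁ l₂ b, Y.faceLoop sF b ∧ l = l₁ ++ l₂ ∧ l' = l₁ ++ b ++ l₂)

/-- Homotopy (rel endpoints) of walks from `u` to `v`, inside the subcomplex with
edge set `sE` and face set `sF`. -/
def Homotopic (sE : Set Y.E) (sF : Set Y.F) (u v : Y.V) (c c' : List Y.D) : Prop :=
  Relation.EqvGen
    (fun a b =>
      Y.WalkFrom u v a ∧ Y.WalkFrom u v b ∧ Y.InSet sE a ∧ Y.InSet sE b ∧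
        (Y.elemMove sE sF a b ∨ Y.elemMove sE sF b a)) c c'

/-- A closed walk which is null-homotopic. -/
def NullHomotopic (sE : Set Y.E) (sF : Set Y.F) (c : List Y.D) : Prop :=
  ∃ v, Y.WalkFrom v v c ∧ Y.Homotopic sE sF v v c []

/-- An essential cycle: a nonempty closed walk which is not null-homotopic. -/
def Essential (sE : Set Y.E) (sF : Set Y.F) (c : List Y.D) : Prop :=
  Y.IsCycle c ∧ Y.InSet sE c ∧ ¬ Y.NullHomotopic sE sF c

/-- Free homotopy of closed walks. -/
def FreelyHomotopic (sE : Set Y.E) (sF : Set Y.F) (c c' : List Y.D) : Prop :=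
  ∃ u v q, Y.WalkFrom u u c ∧ Y.WalkFrom v v c' ∧ Y.WalkFrom u v q ∧
    Y.InSet sE q ∧ Y.InSet sE c ∧ Y.InSet sE c' ∧
    Y.Homotopic sE sF u u c (q ++ c' ++ Y.revW q)

/-- `c` is a shortest representative of its free homotopy class. -/
def ShortestRep (sE : Set Y.E) (sF : Set Y.F) (c : List Y.D) : Prop :=
  ∀ c', Y.FreelyHomotopic sE sF c c' → c.length ≤ c'.length

end Complex

/-- `s` occurs as a contiguous subword of the cyclic word `c`. -/
def cycContains {α : Type*} (c s : List α) : Prop :=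
  s ≠ [] ∧ s.length ≤ c.length ∧ s <:+: (c ++ c)

namespace Complex

variable {g : ℕ} (Y : Complex g)

/-- The cycle `c` contains no long block and no long chain. -/
def NoLongBlockOrChainCyc (c : List Y.D) : Prop :=
  (∀ s, cycContains c s → ¬ (Y.IsBlock s ∧ 2 * g + 1 ≤ s.length)) ∧
  (∀ bs, Y.IsLongChain bs → ¬ cycContains c bs.flatten)

/-- A (cyclically) non-backtracking cycle. -/
def NonBacktrackingCyc (c : List Y.D) : Prop :=
  ¬ ∃ d : Y.D, cycContains c [d, Y.dRev d]

/-- A cycle which is essential and a shortest representative of its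
free homotopy class. -/
def GoodCycle (c : List Y.D) : Prop :=
  Y.IsCycle c ∧ Y.Essential Set.univ Set.univ c ∧ Y.ShortestRep Set.univ Set.univ c

/-! ### Cells and components of complements -/

/-- The cells of a complex. -/
def Cell := Y.V ⊕ Y.E ⊕ Y.F

def vCell (v : Y.V) : Y.Cell := Sum.inl v
def eCell (e : Y.E) : Y.Cell := Sum.inr (Sum.inl e)
def fCell (f : Y.F) : Y.Cell := Sum.inr (Sum.inr f)

/-- Basic incidence of (open) cells. -/
def inc0 : Y.Cell → Y.Cell → Prop := fun c c' =>
  match c, c' with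
  | Sum.inl v, Sum.inr (Sum.inl e) => Y.src e = v ∨ Y.dst e = v
  | Sum.inl v, Sum.inr (Sum.inr f) => ∃ d ∈ Y.bdry f, Y.dTail d = v
  | Sum.inr (Sum.inl e), Sum.inr (Sum.inr f) => ∃ b, (e, b) ∈ Y.bdry f
  | _, _ => False

/-- Symmetrized incidence of cells. -/
def incid (c c' : Y.Cell) : Prop := Y.inc0 c c' ∨ Y.inc0 c' c

end Complex

/-- A triple of subsets of the cells of a complex `Y` (a prospective subcomplex). -/
structure SubC {g : ℕ} (Y : Complex g) where
  sV : Set Y.V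
  sE : Set Y.E
  sF : Set Y.F

namespace SubC

variable {g : ℕ} {Y : Complex g}

/-- `S` is an actual subcomplex: closed under taking boundaries of cells. -/
def IsSub (S : SubC Y) : Prop :=
  (∀ e ∈ S.sE, Y.src e ∈ S.sV ∧ Y.dst e ∈ S.sV) ∧
  (∀ f ∈ S.sF, ∀ d ∈ Y.bdry f, d.1 ∈ S.sE)

/-- Containment of subcomplexes. -/
def le (S T : SubC Y) : Prop := S.sV ⊆ T.sV ∧ S.sE ⊆ T.sE ∧ S.sF ⊆ T.sF

/-- Compactness: finitely many cells. -/
def Compact (S : SubC Y) : Prop := S.sV.Finite ∧ S.sE.Finite ∧ S.sF.Finite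

/-- Connectivity of the subcomplex. -/
def Connected (S : SubC Y) : Prop :=
  S.sV.Nonempty ∧ ∀ v ∈ S.sV, ∀ w ∈ S.sV, ∃ l, Y.WalkFrom v w l ∧ Y.InSet S.sE l

/-- Image of a subcomplex under a morphism. -/
def image {Z : Complex g} (φ : Hom Y Z) (S : SubC Y) : SubC Z :=
  ⟨φ.mV '' S.sV, φ.mE '' S.sE, φ.mF '' S.sF⟩

end SubC

/-- The whole complex, as a subcomplex of itself. -/
def fullSub {g : ℕ} (Y : Complex g) : SubC Y := ⟨Set.univ, Set.univ, Set.univ⟩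

namespace Complex

variable {g : ℕ} (Y : Complex g)

/-- Membership of a cell in a subcomplex. -/
def inSub (S : SubC Y) : Y.Cell → Prop := fun c =>
  match c with
  | Sum.inl v => v ∈ S.sV
  | Sum.inr (Sum.inl e) => e ∈ S.sE
  | Sum.inr (Sum.inr f) => f ∈ S.sF

/-- Reachability of cells through the open complement of the subcomplex `S`
(= lying in the same connected component of the complement). -/
def reachS (S : SubC Y) (c c' : Y.Cell) : Prop :=
  Relation.ReflTransGen (fun a b => Y.incid a b ∧ ¬ Y.inSub S a ∧ ¬ Y.inSub S b) c c'

end Complex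

/-- The closure (as a subcomplex) of the connected component of the cell `c₀` in the
complement of the subcomplex `S`. -/
def compCl {g : ℕ} (Y : Complex g) (S : SubC Y) (c₀ : Y.Cell) : SubC Y :=
  let cF : Set Y.F := {f | Y.reachS S c₀ (Y.fCell f)}
  let cE : Set Y.E :=
    {e | Y.reachS S c₀ (Y.eCell e)} ∪ {e | ∃ f ∈ cF, ∃ b, (e, b) ∈ Y.bdry f}
  let cV : Set Y.V :=
    {v | Y.reachS S c₀ (Y.vCell v)} ∪ {v | ∃ e ∈ cE, Y.src e = v ∨ Y.dst e = v}
  ⟨cV, cE, cF⟩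

/-- The subcomplex has exactly one boundary cycle (which covers all boundary darts). -/
def OneBdry {g : ℕ} (Y : Complex g) (S : SubC Y) : Prop :=
  ∃ δ, Y.BCycle S.sE S.sF δ ∧ ∀ d, Y.IsBDart S.sE S.sF d → d ∈ δ

/-- The subcomplex has exactly two (disjoint) boundary cycles, covering all
boundary darts. -/
def TwoBdry {g : ℕ} (Y : Complex g) (S : SubC Y) : Prop :=
  ∃ δ₁ δ₂, Y.BCycle S.sE S.sF δ₁ ∧ Y.BCycle S.sE S.sF δ₂ ∧ δ₁.Disjoint δ₂ ∧
    ∀ d, Y.IsBDart S.sE S.sF d → d ∈ δ₁ ∨ d ∈ δ₂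

/-- The boundary-reduced closure of `S` inside `Y`: the intersection of all
intermediate boundary reduced subcomplexes. -/
def BRcl {g : ℕ} (Y : Complex g) (S : SubC Y) : SubC Y where
  sV := ⋂ T ∈ {T : SubC Y | T.IsSub ∧ S.le T ∧ Y.BoundaryReduced T.sE T.sF}, T.sV
  sE := ⋂ T ∈ {T : SubC Y | T.IsSub ∧ S.le T ∧ Y.BoundaryReduced T.sE T.sF}, T.sE
  sF := ⋂ T ∈ {T : SubC Y | T.IsSub ∧ S.le T ∧ Y.BoundaryReduced T.sE T.sF}, T.sF

/-- The strongly-boundary-reduced closure of `S` inside `Y`. -/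
def SBRcl {g : ℕ} (Y : Complex g) (S : SubC Y) : SubC Y where
  sV := ⋂ T ∈ {T : SubC Y | T.IsSub ∧ S.le T ∧ Y.StronglyBoundaryReduced T.sE T.sF}, T.sV
  sE := ⋂ T ∈ {T : SubC Y | T.IsSub ∧ S.le T ∧ Y.StronglyBoundaryReduced T.sE T.sF}, T.sE
  sF := ⋂ T ∈ {T : SubC Y | T.IsSub ∧ S.le T ∧ Y.StronglyBoundaryReduced T.sE T.sF}, T.sF

/-- An isomorphism between the subcomplex `S` of `Y` and the subcomplex `T` of `Z`. -/
structure SubEquiv {g : ℕ} (Y : Complex g) (S : SubC Y) (Z : Complex g) (T : SubC Z) where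
  fV : Y.V → Z.V
  fE : Y.E → Z.E
  fF : Y.F → Z.F
  bijV : Set.BijOn fV S.sV T.sV
  bijE : Set.BijOn fE S.sE T.sE
  bijF : Set.BijOn fF S.sF T.sF
  hsrc : ∀ e ∈ S.sE, Z.src (fE e) = fV (Y.src e)
  hdst : ∀ e ∈ S.sE, Z.dst (fE e) = fV (Y.dst e)
  hlab : ∀ e ∈ S.sE, Z.lab (fE e) = Y.lab e
  hbdry : ∀ f ∈ S.sF, Z.bdry (fF f) = (Y.bdry f).map fun d => (fE d.1, d.2)

/-- `FunnelComponent Y S c₀`: the connected component of the cell `c₀` in the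
complement of the subcomplex `S` is a twice-punctured sphere with one funnel and
one fake-puncture.  Rendered combinatorially: the component contains infinitely
many `4g`-gons (the funnel); there is a boundary cycle `δ` of `S` adjacent to the
component, it is unique (one fake-puncture), and every closed walk inside the
closure of the component is freely homotopic there to a power of `δ` or of its
inverse (so the closure is a half-open annulus bounded by `δ`). -/
def FunnelComponent {g : ℕ} (Y : Complex g) (S : SubC Y) (c₀ : Y.Cell) : Prop :=
  {f : Y.F | Y.reachS S c₀ (Y.fCell f)}.Infinite ∧
  ∃ δ : List Y.D, Y.BCycle S.sE S.sF δ ∧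
    (∃ d ∈ δ, ∃ c', Y.incid (Y.eCell d.1) c' ∧ Y.reachS S c₀ c') ∧
    (∀ δ', Y.BCycle S.sE S.sF δ' →
      (∃ d ∈ δ', ∃ c', Y.incid (Y.eCell d.1) c' ∧ Y.reachS S c₀ c') →
      ∃ n, δ' = δ.rotate n) ∧
    (∀ (v : Y.V) (l : List Y.D), Y.WalkFrom v v l →
      Y.InSet ({e | Y.reachS S c₀ (Y.eCell e)} ∪ {e | ∃ b, (e, b) ∈ δ}) l →
      ∃ n,
        Y.FreelyHomotopic ({e | Y.reachS S c₀ (Y.eCell e)} ∪ {e | ∃ b, (e, b) ∈ δ})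
          {f | Y.reachS S c₀ (Y.fCell f)} l ((List.replicate n δ).flatten) ∨
        Y.FreelyHomotopic ({e | Y.reachS S c₀ (Y.eCell e)} ∪ {e | ∃ b, (e, b) ∈ δ})
          {f | Y.reachS S c₀ (Y.fCell f)} l ((List.replicate n (Y.revW δ)).flatten))

/-- `Y` contains a funnel: an essential cycle `δ` of `Y` cutting off an infinite
region of `Y` which is attached to the rest of `Y` only along `δ`, contains no
boundary of `Y`, and is a half-open annulus (every loop inside is freely homotopic
to a power of `δ`); i.e. an end of `Y` which is a puncture of the ambient covering. -/
def HasFunnel {g : ℕ} (Y : Complex g) : Prop :=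
  ∃ (δ : List Y.D) (sE : Set Y.E) (sF : Set Y.F),
    Y.IsCycle δ ∧ Y.Essential Set.univ Set.univ δ ∧
    (∀ d ∈ δ, d.1 ∉ sE) ∧ sE.Nonempty ∧ sF.Infinite ∧
    (∀ f ∈ sF, ∀ d ∈ Y.bdry f, d.1 ∈ sE ∨ ∃ b, (d.1, b) ∈ δ) ∧
    (∀ f : Y.F, (∃ d ∈ Y.bdry f, d.1 ∈ sE) → f ∈ sF) ∧
    (∀ d : Y.D, d.1 ∈ sE → ¬ Y.IsBDart Set.univ Set.univ d) ∧
    (∀ v : Y.V, (∃ e ∈ sE, Y.src e = v ∨ Y.dst e = v) → (∀ d ∈ δ, Y.dTail d ≠ v) →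
      ∀ e' : Y.E, (Y.src e' = v ∨ Y.dst e' = v) → e' ∈ sE) ∧
    (∀ (v : Y.V) (l : List Y.D), Y.WalkFrom v v l →
      Y.InSet (sE ∪ {e | ∃ b, (e, b) ∈ δ}) l →
      ∃ n,
        Y.FreelyHomotopic (sE ∪ {e | ∃ b, (e, b) ∈ δ}) sF l
          ((List.replicate n δ).flatten) ∨
        Y.FreelyHomotopic (sE ∪ {e | ∃ b, (e, b) ∈ δ}) sF l
          ((List.replicate n (Y.revW δ)).flatten))

/-- The fundamental group of `Y` is cyclic: some closed walk `c` generates all free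
homotopy classes of loops.  (For a connected surface this is *equivalent to NOT
having genus ≥ 1 or at least 3 boundary components/punctures*.) -/
def CyclicPi1 {g : ℕ} (Y : Complex g) : Prop :=
  ∃ c : List Y.D, ∀ (v : Y.V) (l : List Y.D), Y.WalkFrom v v l →
    ∃ n,
      Y.FreelyHomotopic Set.univ Set.univ l ((List.replicate n c).flatten) ∨
      Y.FreelyHomotopic Set.univ Set.univ l ((List.replicate n (Y.revW c)).flatten)

/-! ### The covering space `J\~Σ_g` and the core surface of `J` -/

/-- Right cosets `Jx` of `J` in `Γ_g` — the vertices (and faces) of `J\~Σ_g`. -/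
abbrev Cos (g : ℕ) (J : Subgroup (Gamma g)) := Quotient (QuotientGroup.rightRel J)

/-- The coset `Jx`. -/
def mkCos (g : ℕ) (J : Subgroup (Gamma g)) (x : Gamma g) : Cos g J :=
  Quotient.mk _ x

/-- Right multiplication on right cosets. -/
def rmul (g : ℕ) (J : Subgroup (Gamma g)) (x : Gamma g) : Cos g J → Cos g J :=
  Quotient.map (· * x) (by
    intro a b hab
    have h1 : b * a⁻¹ ∈ J := QuotientGroup.rightRel_apply.mp hab
    refine QuotientGroup.rightRel_apply.mpr ?_
    have h2 : b * x * (a * x)⁻¹ = b * a⁻¹ := by group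
    rw [h2]; exact h1)

/-- The walk in `J\~Σ_g` starting at a vertex and reading a given word. -/
def relWalk (g : ℕ) (J : Subgroup (Gamma g)) :
    Cos g J → List (Letter g) → List ((Cos g J × Fin (2 * g)) × Bool)
  | _, [] => []
  | v, (ℓ, true) :: w =>
      ((v, ℓ), true) :: relWalk g J (rmul g J (PresentedGroup.of ℓ) v) w
  | v, (ℓ, false) :: w =>
      ((rmul g J (PresentedGroup.of ℓ)⁻¹ v, ℓ), false) ::
        relWalk g J (rmul g J (PresentedGroup.of ℓ)⁻¹ v) w

/-- The covering space `Υ = J\~Σ_g` of `Σ_g` corresponding to the subgroup `J`,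
with the CW-structure pulled back from `Σ_g`: vertices and `4g`-gons are the right
cosets of `J`, and each vertex carries one outgoing edge per label. -/
def cover (g : ℕ) (J : Subgroup (Gamma g)) : Complex g where
  V := Cos g J
  E := Cos g J × Fin (2 * g)
  F := Cos g J
  src e := e.1
  dst e := rmul g J (PresentedGroup.of e.2) e.1
  lab e := e.2
  bdry v := relWalk g J v (relatorWord g)

/-- The map `J₁\~Σ_g → J₂\~Σ_g` on vertices, for `J₁ ≤ J₂`. -/
def coverMapV {g : ℕ} {J₁ J₂ : Subgroup (Gamma g)} (h : J₁ ≤ J₂) :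
    Cos g J₁ → Cos g J₂ :=
  Quotient.map id (by
    intro a b hab
    have h1 : b * a⁻¹ ∈ J₁ := QuotientGroup.rightRel_apply.mp hab
    exact QuotientGroup.rightRel_apply.mpr (h h1))

/-- The natural covering morphism on edges. -/
def coverMapE {g : ℕ} {J₁ J₂ : Subgroup (Gamma g)} (h : J₁ ≤ J₂)
    (e : (cover g J₁).E) : (cover g J₂).E :=
  (coverMapV h e.1, e.2)

/-- The natural covering morphism on darts. -/
def coverMapD {g : ℕ} {J₁ J₂ : Subgroup (Gamma g)} (h : J₁ ≤ J₂)
    (d : (cover g J₁).D) : (cover g J₂).D :=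
  (coverMapE h d.1, d.2)

/-- The cycle `c` in `J\~Σ_g` represents the conjugacy class of `γ` in `J`
(conjugacy classes in `J` ↔ free homotopy classes of essential loops in `J\~Σ_g`). -/
def RepCls {g : ℕ} (J : Subgroup (Gamma g)) (c : List ((cover g J).D))
    (γ : Gamma g) : Prop :=
  ∃ x j : Gamma g, j ∈ J ∧
    (cover g J).WalkFrom (mkCos g J x) (mkCos g J x) c ∧
    x * wordG ((cover g J).wordOf c) * x⁻¹ = j * γ * j⁻¹

/-- Step (i) of the definition of the core surface: the edges lying on some
shortest representative cycle of an essential free homotopy class. -/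
def coreE1 (g : ℕ) (J : Subgroup (Gamma g)) : Set (cover g J).E :=
  {e | ∃ c, (cover g J).GoodCycle c ∧ ∃ b, (e, b) ∈ c}

/-- The vertices of step (i) of the definition of the core surface. -/
def coreV1 (g : ℕ) (J : Subgroup (Gamma g)) : Set (cover g J).V :=
  {v | ∃ e ∈ coreE1 g J, (cover g J).src e = v ∨ (cover g J).dst e = v}

/-- Step (i) of the definition of the core surface, as a subcomplex of `J\~Σ_g`. -/
def coreS1 (g : ℕ) (J : Subgroup (Gamma g)) : SubC (cover g J) :=
  ⟨coreV1 g J, coreE1 g J, ∅⟩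

/-- A cell of `J\~Σ_g` lying in a connected component of the complement of step (i)
which contains only finitely many `4g`-gons. -/
def coreFin (g : ℕ) (J : Subgroup (Gamma g)) (c : (cover g J).Cell) : Prop :=
  ¬ (cover g J).inSub (coreS1 g J) c ∧
  {f : (cover g J).F | (cover g J).reachS (coreS1 g J) c ((cover g J).fCell f)}.Finite

open Classical in
/-- The core surface `Core(J)` of a subgroup `J ≤ Γ_g`, as a subcomplex of
`Υ = J\~Σ_g`: (i) the union of all shortest representative cycles of essential
free homotopy classes in `Υ`, together with (ii) all connected components of the
complement containing finitely many `4g`-gons.  For the trivial subgroup it is a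
single vertex. -/
def coreSub (g : ℕ) (J : Subgroup (Gamma g)) : SubC (cover g J) :=
  if J = ⊥ then ⟨{mkCos g J 1}, ∅, ∅⟩
  else
    ⟨coreV1 g J ∪ {v | coreFin g J ((cover g J).vCell v)},
     coreE1 g J ∪ {e | coreFin g J ((cover g J).eCell e)},
     {f | coreFin g J ((cover g J).fCell f)}⟩

/-!
A covering of `Σ_g` is the same thing as a permutation representation of the free group on the
edge labels that kills the relator, that is, a `Γ_g`-set: a group element sends a vertex `v` to
the starting point of the walk that reads it and ends at `v`. With this convention the
concatenation of walks corresponds to a left action.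

Hence a map from the vertices of `Y` to such a set that is compatible with the labeled edges turns
walks into group elements, and the word of a walk determines its starting point from its endpoint.
If the map is injective, `Y` satisfies **P2**; a tiled surface has such a map by restriction of the
monodromy of the covering. Conversely every complex has a universal map of this kind, into the
`Γ_g`-set of formal translates `(x, u)` of vertices in which `(x, u)` and `(x w, v)` are identified
whenever `w` is read along a walk from `u` to `v`. **P2** says exactly that it is injective on
vertices; **P1** and **P3** then make it injective on edges and faces of the corresponding
covering.
-/

section Words

variable {g : ℕ}

theorem relatorWord_ne_nil (hg : g ≠ 0) : relatorWord g ≠ [] := by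
  simpa [relatorWord] using hg

theorem relatorF_eq_mk (g : ℕ) : relatorF g = FreeGroup.mk (relatorWord g) := by
  rw [← FreeGroup.lift_of_apply (FreeGroup.mk (relatorWord g)), FreeGroup.lift_mk]
  simp only [relatorF, Bool.cond_eq_ite]

theorem wordG_eq_mk (w : List (Letter g)) :
    wordG w = PresentedGroup.mk {relatorF g} (FreeGroup.mk w) := by
  rw [← FreeGroup.lift_of_apply (FreeGroup.mk w), FreeGroup.lift_mk, map_list_prod, List.map_map]
  refine congrArg List.prod (List.map_congr_left fun a _ => ?_)
  obtain ⟨ℓ, _ | _⟩ := a <;> rfl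

theorem wordG_append (w w' : List (Letter g)) : wordG (w ++ w') = wordG w * wordG w' := by
  simp only [wordG, List.map_append, List.prod_append]

theorem wordG_invRev (w : List (Letter g)) : wordG (FreeGroup.invRev w) = (wordG w)⁻¹ := by
  simp only [wordG_eq_mk, ← FreeGroup.inv_mk, map_inv]

theorem map_mk_eq_one_of_wordG_eq_one {G : Type*} [Group G] {ρ : FreeGroup (Fin (2 * g)) →* G}
    (hρ : ρ (relatorF g) = 1) {w : List (Letter g)} (hw : wordG w = 1) :
    ρ (FreeGroup.mk w) = 1 := by
  have hmem : FreeGroup.mk w ∈ Subgroup.normalClosure {relatorF g} := by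
    rw [wordG_eq_mk] at hw
    exact PresentedGroup.mk_eq_one_iff.mp hw
  have hker : Subgroup.normalClosure {relatorF g} ≤ ρ.ker :=
    Subgroup.normalClosure_le_normal (Set.singleton_subset_iff.mpr hρ)
  exact hker hmem

end Words

namespace Complex

variable {g : ℕ} {Y Z : Complex g}

theorem walkFrom_nil_iff {u v : Y.V} : Y.WalkFrom u v [] ↔ u = v :=
  ⟨fun h => by cases h; rfl, fun h => h ▸ .nil u⟩

theorem walkFrom_cons_iff {u v : Y.V} {d : Y.D} {l : List Y.D} :
    Y.WalkFrom u v (d :: l) ↔ u = Y.dTail d ∧ Y.WalkFrom (Y.dHead d) v l :=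
  ⟨fun h => by cases h with | cons _ h => exact ⟨rfl, h⟩, fun ⟨hu, h⟩ => hu ▸ .cons d h⟩

theorem WalkFrom.append {u v w : Y.V} {l l' : List Y.D} (h : Y.WalkFrom u v l)
    (h' : Y.WalkFrom v w l') : Y.WalkFrom u w (l ++ l') := by
  induction h with
  | nil v => exact h'
  | cons d _ ih => exact .cons d (ih h')

theorem dTail_dRev (d : Y.D) : Y.dTail (Y.dRev d) = Y.dHead d := by
  obtain ⟨e, _ | _⟩ := d <;> rfl

theorem dHead_dRev (d : Y.D) : Y.dHead (Y.dRev d) = Y.dTail d := by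
  obtain ⟨e, _ | _⟩ := d <;> rfl

theorem WalkFrom.revW {u v : Y.V} {l : List Y.D} (h : Y.WalkFrom u v l) :
    Y.WalkFrom v u (Y.revW l) := by
  induction h with
  | nil v => exact .nil v
  | @cons d v l _ ih =>
    have hd : Y.WalkFrom (Y.dHead d) (Y.dTail d) [Y.dRev d] :=
      walkFrom_cons_iff.mpr ⟨(dTail_dRev d).symm, walkFrom_nil_iff.mpr (dHead_dRev d)⟩
    simpa only [Complex.revW, List.map_cons, List.reverse_cons] using ih.append hd

theorem wordOf_append (l l' : List Y.D) : Y.wordOf (l ++ l') = Y.wordOf l ++ Y.wordOf l' :=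
  List.map_append

theorem wordOf_revW (l : List Y.D) : Y.wordOf (Y.revW l) = FreeGroup.invRev (Y.wordOf l) := by
  simp only [wordOf, revW, FreeGroup.invRev, List.map_reverse, List.map_map]
  rfl

theorem WalkFrom.tail_unique {u v u' v' : Y.V} {l : List Y.D} (hl : l ≠ [])
    (h : Y.WalkFrom u v l) (h' : Y.WalkFrom u' v' l) : u = u' := by
  obtain ⟨d, l, rfl⟩ := List.exists_cons_of_ne_nil hl
  exact (walkFrom_cons_iff.mp h).1.trans (walkFrom_cons_iff.mp h').1.symm

end Complex

namespace Hom

variable {g : ℕ} {Y Z : Complex g} (φ : Hom Y Z)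

theorem dTail_mD (d : Y.D) : Z.dTail (φ.mD d) = φ.mV (Y.dTail d) := by
  obtain ⟨e, _ | _⟩ := d
  exacts [φ.hdst e, φ.hsrc e]

theorem dHead_mD (d : Y.D) : Z.dHead (φ.mD d) = φ.mV (Y.dHead d) := by
  obtain ⟨e, _ | _⟩ := d
  exacts [φ.hsrc e, φ.hdst e]

theorem wordOf_map_mD (l : List Y.D) : Z.wordOf (l.map φ.mD) = Y.wordOf l := by
  simp only [Complex.wordOf, List.map_map]
  exact List.map_congr_left fun d _ => Prod.ext (φ.hlab d.1) rfl

theorem bdry_mF (f : Y.F) : Z.bdry (φ.mF f) = (Y.bdry f).map φ.mD :=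
  φ.hbdry f

theorem mD_injective (hE : Function.Injective φ.mE) : Function.Injective φ.mD :=
  hE.prodMap Function.injective_id

theorem mF_injective (hE : Function.Injective φ.mE) (hY : Function.Injective Y.bdry) :
    Function.Injective φ.mF := fun f f' h => by
  have hmap : (Y.bdry f).map φ.mD = (Y.bdry f').map φ.mD := by
    rw [← bdry_mF, ← bdry_mF, h]
  exact hY (List.map_injective_iff.mpr (φ.mD_injective hE) hmap)

theorem walkFrom_map_mD_iff (hV : Function.Injective φ.mV) {u v : Y.V} {l : List Y.D} :
    Z.WalkFrom (φ.mV u) (φ.mV v) (l.map φ.mD) ↔ Y.WalkFrom u v l := by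
  induction l generalizing u with
  | nil => simp only [List.map_nil, Complex.walkFrom_nil_iff, hV.eq_iff]
  | cons d l ih =>
    simp only [List.map_cons, Complex.walkFrom_cons_iff, dTail_mD, dHead_mD, hV.eq_iff, ih]

end Hom

namespace Complex

variable {g : ℕ} {Y Z : Complex g}

theorem P1.comap (hZ : Z.P1) (φ : Hom Y Z) (hE : Function.Injective φ.mE) : Y.P1 := by
  constructor <;> intro e e' hend hlab
  · exact hE (hZ.1 _ _ (by rw [φ.hsrc, φ.hsrc, hend]) (by rw [φ.hlab, φ.hlab, hlab]))
  · exact hE (hZ.2 _ _ (by rw [φ.hdst, φ.hdst, hend]) (by rw [φ.hlab, φ.hlab, hlab]))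

theorem P3.comap (hg : g ≠ 0) (hZ : Z.P3) {φ : Hom Y Z} (hφ : φ.Inj) : Y.P3 := by
  refine ⟨fun f => ?_, fun f f' h => hφ.2.2 (hZ.2 (by rw [φ.bdry_mF, φ.bdry_mF, h]))⟩
  obtain ⟨⟨x, hwalk⟩, hword⟩ := hZ.1 (φ.mF f)
  rw [φ.bdry_mF, φ.wordOf_map_mD] at hword
  rw [φ.bdry_mF] at hwalk
  refine ⟨?_, hword⟩
  have hne : Y.bdry f ≠ [] := fun h => relatorWord_ne_nil hg (by rw [← hword, h]; rfl)
  obtain ⟨d, l, hl⟩ := List.exists_cons_of_ne_nil hne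
  have hx : x = φ.mV (Y.dTail d) := by
    rw [hl, List.map_cons, walkFrom_cons_iff, φ.dTail_mD] at hwalk
    exact hwalk.1
  subst hx
  exact ⟨Y.dTail d, (φ.walkFrom_map_mD_iff hφ.1).mp hwalk⟩

section Developing

variable {X : Type*} {ρ : FreeGroup (Fin (2 * g)) →* Equiv.Perm X} {f : Y.V → X}

/-- A developing map of `Y` into a set `X` on which the free group on the labels acts through `ρ`:
the generator `ℓ` moves the image of the target of each `ℓ`-labeled edge to the image of its
source. The generators act against the direction of the edges so that a walk reading `w` from `u`
to `v` gives `f u = w • f v`, and the action is a left action. -/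
def IsDeveloping (ρ : FreeGroup (Fin (2 * g)) →* Equiv.Perm X) (f : Y.V → X) : Prop :=
  ∀ e, f (Y.src e) = ρ (FreeGroup.of (Y.lab e)) (f (Y.dst e))

theorem IsDeveloping.comp {f : Z.V → X} (hf : IsDeveloping ρ f) (φ : Hom Y Z) :
    IsDeveloping ρ (f ∘ φ.mV) := fun e => by
  simpa only [Function.comp_apply, φ.hsrc, φ.hdst, φ.hlab] using hf (φ.mE e)

theorem IsDeveloping.apply_dTail (hf : IsDeveloping ρ f) (d : Y.D) :
    f (Y.dTail d) = ρ (FreeGroup.mk [Y.dLet d]) (f (Y.dHead d)) := by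
  obtain ⟨e, _ | _⟩ := d
  · have hinv : FreeGroup.mk [(Y.lab e, false)] = (FreeGroup.of (Y.lab e))⁻¹ := rfl
    change f (Y.dst e) = ρ (FreeGroup.mk [(Y.lab e, false)]) (f (Y.src e))
    rw [hinv, map_inv, Equiv.Perm.eq_inv_iff_eq, hf e]
  · exact hf e

theorem IsDeveloping.apply_walk (hf : IsDeveloping ρ f) {u v : Y.V} {l : List Y.D}
    (h : Y.WalkFrom u v l) : f u = ρ (FreeGroup.mk (Y.wordOf l)) (f v) := by
  induction h with
  | nil v => exact (congrArg (· (f v)) (map_one ρ)).symm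
  | @cons d v l _ ih =>
    have hmk : FreeGroup.mk (Y.wordOf (d :: l)) =
        FreeGroup.mk [Y.dLet d] * FreeGroup.mk (Y.wordOf l) := rfl
    rw [hf.apply_dTail, ih, hmk, map_mul, Equiv.Perm.mul_apply]

theorem IsDeveloping.p2 (hf : IsDeveloping ρ f) (hρ : ρ (relatorF g) = 1)
    (hinj : Function.Injective f) : Y.P2 := fun u v l h hw => hinj <| by
  rw [hf.apply_walk h, map_mk_eq_one_of_wordG_eq_one hρ hw, Equiv.Perm.one_apply]

end Developing

section Monodromy

theorem IsCovering.bijective_src (hZ : Z.IsCovering) (ℓ : Fin (2 * g)) :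
    Function.Bijective fun e : {e // Z.lab e = ℓ} => Z.src e := by
  obtain ⟨hP1, -, hout, -⟩ := hZ
  refine ⟨fun e e' h => Subtype.ext (hP1.1 _ _ h (e.2.trans e'.2.symm)), fun v => ?_⟩
  obtain ⟨e, hsrc, hlab⟩ := hout v ℓ
  exact ⟨⟨e, hlab⟩, hsrc⟩

theorem IsCovering.bijective_dst (hZ : Z.IsCovering) (ℓ : Fin (2 * g)) :
    Function.Bijective fun e : {e // Z.lab e = ℓ} => Z.dst e := by
  obtain ⟨hP1, -, -, hin, -⟩ := hZ
  refine ⟨fun e e' h => Subtype.ext (hP1.2 _ _ h (e.2.trans e'.2.symm)), fun v => ?_⟩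
  obtain ⟨e, hdst, hlab⟩ := hin v ℓ
  exact ⟨⟨e, hlab⟩, hdst⟩

/-- The monodromy of a covering: the generator `ℓ` sends the target of each `ℓ`-labeled edge to its
source. -/
def IsCovering.monodromy (hZ : Z.IsCovering) : FreeGroup (Fin (2 * g)) →* Equiv.Perm Z.V :=
  FreeGroup.lift fun ℓ =>
    (Equiv.ofBijective _ (hZ.bijective_dst ℓ)).symm.trans (Equiv.ofBijective _ (hZ.bijective_src ℓ))

theorem IsCovering.isDeveloping_id (hZ : Z.IsCovering) :
    IsDeveloping hZ.monodromy id := fun e => by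
  have hdst : (Equiv.ofBijective _ (hZ.bijective_dst (Z.lab e))).symm (Z.dst e) = ⟨e, rfl⟩ :=
    Equiv.ofBijective_symm_apply_apply _ (hZ.bijective_dst (Z.lab e)) ⟨e, rfl⟩
  simp only [monodromy, FreeGroup.lift_apply_of, Equiv.trans_apply, id, hdst,
    Equiv.ofBijective_apply]

theorem IsCovering.exists_dart_to (hZ : Z.IsCovering) (v : Z.V) (a : Letter g) :
    ∃ d, Z.dHead d = v ∧ Z.dLet d = a := by
  obtain ⟨-, -, hout, hin, -⟩ := hZ
  obtain ⟨ℓ, _ | _⟩ := a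
  · obtain ⟨e, hsrc, hlab⟩ := hout v ℓ
    exact ⟨(e, false), hsrc, Prod.ext hlab rfl⟩
  · obtain ⟨e, hdst, hlab⟩ := hin v ℓ
    exact ⟨(e, true), hdst, Prod.ext hlab rfl⟩

theorem IsCovering.exists_walk_to (hZ : Z.IsCovering) (v : Z.V) (w : List (Letter g)) :
    ∃ u l, Z.WalkFrom u v l ∧ Z.wordOf l = w := by
  induction w with
  | nil => exact ⟨v, [], .nil v, rfl⟩
  | cons a w ih =>
    obtain ⟨u, l, hl, hw⟩ := ih
    obtain ⟨d, rfl, rfl⟩ := hZ.exists_dart_to u a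
    exact ⟨Z.dTail d, d :: l, .cons d hl, congrArg _ hw⟩

theorem IsCovering.monodromy_relatorF (hZ : Z.IsCovering) : hZ.monodromy (relatorF g) = 1 := by
  ext v
  obtain ⟨u, l, hl, hw⟩ := hZ.exists_walk_to v (relatorWord g)
  have hdev : u = hZ.monodromy (FreeGroup.mk (Z.wordOf l)) v := hZ.isDeveloping_id.apply_walk hl
  have hclosed : u = v := hZ.2.2.2.2.1 u v l hl hw
  rw [relatorF_eq_mk, ← hw, ← hdev, hclosed, Equiv.Perm.one_apply]

end Monodromy

section PermCover

variable {X : Type} (ρ : FreeGroup (Fin (2 * g)) →* Equiv.Perm X)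

/-- The dart of `permCover ρ` that reads a given letter and ends at `v`. -/
def liftDart (v : X) : Letter g → (X × Fin (2 * g)) × Bool
  | (ℓ, true) => ((v, ℓ), true)
  | (ℓ, false) => (((ρ (FreeGroup.of ℓ))⁻¹ v, ℓ), false)

/-- The walk of `permCover ρ` that reads a given word and ends at `v`. -/
def liftWalk (v : X) : List (Letter g) → List ((X × Fin (2 * g)) × Bool)
  | [] => []
  | a :: w => liftDart ρ (ρ (FreeGroup.mk w) v) a :: liftWalk v w

/-- The covering of `Σ_g` with vertex set `X` and monodromy `ρ` (a covering only if `ρ` kills the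
relator). The edge `(v, ℓ)` is the `ℓ`-labeled edge ending at `v`, and the face `v` is the one
whose boundary walk starts and ends at `v`. -/
def permCover : Complex g where
  V := X
  E := X × Fin (2 * g)
  F := X
  src e := ρ (FreeGroup.of e.2) e.1
  dst e := e.1
  lab e := e.2
  bdry v := liftWalk ρ v (relatorWord g)

theorem isDeveloping_permCover_id : IsDeveloping (Y := permCover ρ) (X := X) ρ id :=
  fun _ => rfl

theorem dLet_liftDart (v : X) (a : Letter g) : (permCover ρ).dLet (liftDart ρ v a) = a := by
  obtain ⟨ℓ, _ | _⟩ := a <;> rfl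

theorem dHead_liftDart (v : X) (a : Letter g) : (permCover ρ).dHead (liftDart ρ v a) = v := by
  obtain ⟨ℓ, _ | _⟩ := a
  exacts [Equiv.apply_symm_apply _ v, rfl]

theorem wordOf_liftWalk (v : X) (w : List (Letter g)) :
    (permCover ρ).wordOf (liftWalk ρ v w) = w := by
  induction w with
  | nil => rfl
  | cons a w ih => exact congrArg₂ List.cons (dLet_liftDart ρ _ a) ih

theorem walkFrom_liftWalk (v : X) (w : List (Letter g)) :
    (permCover ρ).WalkFrom (ρ (FreeGroup.mk w) v) v (liftWalk ρ v w) := by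
  induction w with
  | nil => exact walkFrom_nil_iff.mpr (congrArg (· v) (map_one ρ))
  | cons a w ih =>
    have htail := (isDeveloping_permCover_id ρ).apply_dTail (liftDart ρ (ρ (FreeGroup.mk w) v) a)
    rw [dLet_liftDart, dHead_liftDart] at htail
    refine walkFrom_cons_iff.mpr ⟨Eq.trans ?_ htail.symm, ?_⟩
    · have hmk : FreeGroup.mk (a :: w) = FreeGroup.mk [a] * FreeGroup.mk w := rfl
      rw [hmk, map_mul, Equiv.Perm.mul_apply]
      rfl
    · rwa [dHead_liftDart]

variable {ρ}

theorem IsDeveloping.map_dart {f : Y.V → X} (hf : IsDeveloping ρ f) (d : Y.D) :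
    ((f (Y.dst d.1), Y.lab d.1), d.2) = liftDart ρ (f (Y.dHead d)) (Y.dLet d) := by
  obtain ⟨e, _ | _⟩ := d
  · have hdst : f (Y.dst e) = (ρ (FreeGroup.of (Y.lab e)))⁻¹ (f (Y.src e)) :=
      Equiv.Perm.eq_inv_iff_eq.mpr (hf e).symm
    exact congrArg (fun x => ((x, Y.lab e), false)) hdst
  · rfl

theorem IsDeveloping.map_walk {f : Y.V → X} (hf : IsDeveloping ρ f) {u v : Y.V} {l : List Y.D}
    (h : Y.WalkFrom u v l) :
    l.map (fun d => ((f (Y.dst d.1), Y.lab d.1), d.2)) = liftWalk ρ (f v) (Y.wordOf l) := by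
  induction h with
  | nil _ => rfl
  | @cons d _ l h ih =>
    rw [List.map_cons, ih, hf.map_dart, hf.apply_walk h]
    rfl

theorem p1_permCover : (permCover ρ).P1 := by
  constructor
  · rintro ⟨v, ℓ⟩ ⟨v', ℓ'⟩ hsrc rfl
    exact Prod.ext ((ρ (FreeGroup.of ℓ)).injective hsrc) rfl
  · exact fun e e' hdst hlab => Prod.ext hdst hlab

theorem walkFrom_bdry_permCover (hρ : ρ (relatorF g) = 1) (v : X) :
    (permCover ρ).WalkFrom v v ((permCover ρ).bdry v) := by
  have h := walkFrom_liftWalk ρ v (relatorWord g)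
  rwa [← relatorF_eq_mk, hρ, Equiv.Perm.one_apply] at h

theorem p3_permCover (hg : g ≠ 0) (hρ : ρ (relatorF g) = 1) : (permCover ρ).P3 := by
  have hword (v : X) : (permCover ρ).wordOf ((permCover ρ).bdry v) = relatorWord g :=
    wordOf_liftWalk ρ v (relatorWord g)
  refine ⟨fun v => ⟨⟨v, walkFrom_bdry_permCover hρ v⟩, hword v⟩, fun v v' h => ?_⟩
  have hne : (permCover ρ).bdry v ≠ [] := fun hnil =>
    relatorWord_ne_nil hg (by rw [← hword v, hnil]; rfl)
  exact (walkFrom_bdry_permCover hρ v).tail_unique hne (h ▸ walkFrom_bdry_permCover hρ v')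

theorem isCovering_permCover (hg : g ≠ 0) (hρ : ρ (relatorF g) = 1) :
    (permCover ρ).IsCovering := by
  refine ⟨p1_permCover, p3_permCover hg hρ, fun v ℓ => ?_, fun v ℓ => ⟨(v, ℓ), rfl, rfl⟩,
    fun u v l hl hw => ?_, fun v l hl hw => ⟨v, ?_⟩⟩
  · exact ⟨((ρ (FreeGroup.of ℓ))⁻¹ v, ℓ), Equiv.apply_symm_apply _ v, rfl⟩
  · have h := (isDeveloping_permCover_id ρ).apply_walk hl
    rwa [hw, ← relatorF_eq_mk, hρ] at h
  · have h := (isDeveloping_permCover_id ρ).map_walk hl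
    rw [hw] at h
    exact h.symm.trans (List.map_id l)

theorem IsDeveloping.exists_hom_permCover_inj {f : Y.V → X} (hf : IsDeveloping ρ f)
    (hinj : Function.Injective f) (hP1 : Y.P1) (hP3 : Y.P3) :
    ∃ φ : Hom Y (permCover ρ), φ.Inj := by
  choose base hbase using fun c => (hP3.1 c).1
  let φ : Hom Y (permCover ρ) :=
    { mV := f
      mE := fun e => (f (Y.dst e), Y.lab e)
      mF := fun c => f (base c)
      hsrc := fun e => (hf e).symm
      hdst := fun _ => rfl
      hlab := fun _ => rfl
      hbdry := fun c => by
        have hlift := hf.map_walk (hbase c)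
        rw [(hP3.1 c).2] at hlift
        exact hlift.symm }
  have hE : Function.Injective φ.mE := fun e e' h =>
    hP1.2 e e' (hinj (Prod.ext_iff.mp h).1) (Prod.ext_iff.mp h).2
  exact ⟨φ, hinj, hE, φ.mF_injective hE hP3.2⟩

end PermCover

section Development

variable (Y)

/-- The identification `(x, u) ∼ (x w, v)` of formal translates of the vertices of `Y`, for every
walk from `u` to `v` reading `w`. -/
def developmentSetoid : Setoid (Gamma g × Y.V) where
  r p q := ∃ l, Y.WalkFrom p.2 q.2 l ∧ p.1 * wordG (Y.wordOf l) = q.1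
  iseqv :=
    { refl := fun p => ⟨[], .nil p.2, mul_one p.1⟩
      symm := by
        rintro ⟨x, u⟩ ⟨_, v⟩ ⟨l, hl, rfl⟩
        exact ⟨Y.revW l, hl.revW, by rw [wordOf_revW, wordG_invRev, mul_inv_cancel_right]⟩
      trans := by
        rintro ⟨x, u⟩ ⟨_, v⟩ ⟨_, w⟩ ⟨l, hl, rfl⟩ ⟨l', hl', rfl⟩
        exact ⟨l ++ l', hl.append hl', by rw [wordOf_append, wordG_append, mul_assoc]⟩ }

/-- The universal `Γ_g`-set receiving a developing map from `Y`: the class of `(x, v)` is the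
translate of the vertex `v` by `x`. It is the vertex set of the covering in which a complex
satisfying **P2** is embedded. -/
def Development : Type :=
  Quotient (developmentSetoid Y)

instance : MulAction (Gamma g) (Development Y) where
  smul z := Quotient.map (fun p => (z * p.1, p.2)) fun _ _ ⟨l, hl, hw⟩ =>
    ⟨l, hl, by rw [mul_assoc, hw]⟩
  one_smul := by
    rintro ⟨x, v⟩
    exact congrArg (fun z => Quotient.mk _ (z, v)) (one_mul x)
  mul_smul := by
    rintro y z ⟨x, v⟩
    exact congrArg (fun z => Quotient.mk _ (z, v)) (mul_assoc y z x)

/-- The canonical map from the vertices of `Y` to its development. -/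
def develop (v : Y.V) : Development Y :=
  Quotient.mk (developmentSetoid Y) (1, v)

/-- The action of the free group on the labels on the development of `Y`, through `Γ_g`. -/
def developmentPerm : FreeGroup (Fin (2 * g)) →* Equiv.Perm (Development Y) :=
  (MulAction.toPermHom (Gamma g) (Development Y)).comp (PresentedGroup.mk {relatorF g})

theorem developmentPerm_relatorF : developmentPerm Y (relatorF g) = 1 := by
  have hrel : PresentedGroup.mk {relatorF g} (relatorF g) = 1 :=
    PresentedGroup.one_of_mem (Set.mem_singleton _)
  rw [developmentPerm, MonoidHom.comp_apply, hrel, map_one]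

theorem isDeveloping_develop : IsDeveloping (developmentPerm Y) Y.develop := fun e =>
  Quotient.sound (s := developmentSetoid Y)
    ⟨[(e, true)], .cons (Y := Y) (e, true) (.nil (Y.dst e)), by
      simp [wordOf, dLet, wordG, letterG, PresentedGroup.of]⟩

variable {Y}

theorem P2.develop_injective (hP2 : Y.P2) : Function.Injective Y.develop := fun u v h => by
  obtain ⟨l, hl, hw⟩ := Quotient.exact (s := developmentSetoid Y) h
  exact hP2 u v l hl (by simpa only [one_mul] using hw)

end Development

end Complex

theorem statement_0_general (g : ℕ) (hg : g ≠ 0) (Y : Complex g) :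
    Y.IsTiledSurface ↔ (Y.P1 ∧ Y.P2 ∧ Y.P3) := by
  constructor
  · rintro ⟨Z, hZ, φ, hφ⟩
    have hdev : Complex.IsDeveloping hZ.monodromy (id ∘ φ.mV) := hZ.isDeveloping_id.comp φ
    exact ⟨hZ.1.comap φ hφ.2.1, hdev.p2 hZ.monodromy_relatorF hφ.1, hZ.2.1.comap hg hφ⟩
  · rintro ⟨hP1, hP2, hP3⟩
    exact ⟨Complex.permCover Y.developmentPerm,
      Complex.isCovering_permCover hg Y.developmentPerm_relatorF,
      Y.isDeveloping_develop.exists_hom_permCover_inj hP2.develop_injective hP1 hP3⟩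

/-- intrinsic definition of a tiled surface.  For `g ≥ 2`, a
complex `Y` with directed labeled edges is a tiled surface — i.e. it embeds as a
subcomplex of a covering space of `Σ_g` compatibly with labels and directions —
if and only if it satisfies **P1**, **P2** and **P3**. -/
theorem statement_0 (g : ℕ) (hg : 2 ≤ g) (Y : Complex g) :
    Y.IsTiledSurface ↔ (Y.P1 ∧ Y.P2 ∧ Y.P3) := by
  exact statement_0_general g (by omega) Y

end CS

end
end

section
/- In every cyclic chain in a tiled surface, the number of blocks of even length is even. In particular, there is no cyclic chain consisting of a single block of length 2g, and no cyclic chain consisting of blocks of lengths 2g, 2g−1, 2g−1, …, 2g−1. -/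
/-!
Formalization preamble for "Core Surfaces" (Magee–Puder).

We work with a fixed combinatorial (CW) model.  The surface `Σ_g` has one vertex,
`2g` directed labeled edges (the label `2i` plays the role of `a_{i+1}` and `2i+1`
the role of `b_{i+1}`), and one `4g`-gon glued along `[a₁,b₁]⋯[a_g,b_g]`.

* `Gamma g` is the surface group, presented by the single relator.
* A `Complex g` is a combinatorial 2-complex with directed, labeled edges and
  2-cells given by their boundary walks; coverings of `Σ_g` are the complexes in
  which every vertex has exactly one incoming/outgoing edge of each label, every
  walk reading the relator is closed, and every closed walk reading the relator
  bounds exactly one face (`IsCovering`).  A tiled surface is a complex that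
  embeds into such a covering (`IsTiledSurface`).
* Blocks, chains, boundary cycles (via the ribbon structure coming from the fixed
  cyclic order of the `4g` half-edges around a vertex of `Σ_g`), boundary-reduced
  and strongly boundary-reduced surfaces are defined combinatorially.
* Homotopy of edge-walks is the edge-path-group homotopy: backtrack insertions and
  insertions of boundaries of (present) faces.
* `cover g J` is the covering space `J\~Σ_g` of `Σ_g` associated to a subgroup
  `J ≤ Γ_g` (vertices = right cosets), and `coreSub g J` is the core surface of
  `J`, defined exactly as in the paper: the union of all shortest representative
  cycles of essential free-homotopy classes, together with all components of the
  complement containing finitely many `4g`-gons.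
-/

noncomputable section

namespace CS

/-!
The half-edges around a vertex of `Σ_g` alternate between the two kinds `a` and `b` of edges.
Hence the kind changes at each step inside a block, where there is no half-edge in between, and
is kept from a block to the next one, where there is exactly one. So a block of length `n` changes
the kind `n - 1` times, and these changes add up to `0` modulo `2` along a cyclic chain.
-/

theorem sum_map_neg_add_of_isChain {α A : Type*} [AddGroup A] {h t : α → A} {l : List α}
    (hl : l ≠ []) (hc : l.IsChain fun x y => h y = t x) :
    (l.map fun x => -h x + t x).sum = -h (l.head hl) + t (l.getLast hl) := by
  induction hc with
  | nil => exact absurd rfl hl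
  | singleton x => simp
  | @cons_cons x y l hxy _ ih =>
    rw [List.map_cons, List.sum_cons, ih (List.cons_ne_nil y l)]
    simp [hxy, add_assoc]

theorem natCast_countP_even (l : List ℕ) :
    (l.countP (· % 2 == 0) : ZMod 2) = (l.map fun n : ℕ => (n : ZMod 2) + 1).sum := by
  induction l with
  | nil => simp
  | cons n l ih =>
    rw [List.countP_cons, List.map_cons, List.sum_cons, Nat.cast_add, ih, add_comm]
    rcases Nat.mod_two_eq_zero_or_one n with hn | hn
    · simp [hn, (ZMod.natCast_eq_zero_iff_even).2 (Nat.even_iff.2 hn)]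
    · simp [hn, (ZMod.natCast_eq_one_iff_odd).2 (Nat.odd_iff.2 hn), CharTwo.add_self_eq_zero]

theorem countP_even_cons_replicate {m n : ℕ} (hm : Even m) (hn : Odd n) (k : ℕ) :
    (m :: List.replicate k n).countP (· % 2 == 0) = 1 := by
  simp [List.countP_replicate, Nat.even_iff.1 hm, Nat.odd_iff.1 hn]

section Letter

variable {g : ℕ}

/-- The kind of a signed letter: `0` for `a_i` and its inverse, `1` for `b_i` and its inverse. -/
def kind (s : Letter g) : ZMod 2 := (s.1 : ℕ)

theorem natCast_posOut (ℓ : Fin (2 * g)) : (posOut ℓ : ZMod 2) = (ℓ : ℕ) := by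
  rw [ZMod.natCast_eq_natCast_iff', posOut]
  split_ifs <;> omega

theorem natCast_posIn (ℓ : Fin (2 * g)) : (posIn ℓ : ZMod 2) = (ℓ : ℕ) := by
  rw [ZMod.natCast_eq_natCast_iff', posIn]
  split_ifs <;> omega

theorem natCast_posLv (s : Letter g) : (posLv s : ZMod 2) = kind s := by
  rw [posLv, kind]
  split_ifs
  exacts [natCast_posOut s.1, natCast_posIn s.1]

theorem natCast_posArr (s : Letter g) : (posArr s : ZMod 2) = kind s := by
  rw [posArr, kind]
  split_ifs
  exacts [natCast_posIn s.1, natCast_posOut s.1]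

theorem posArr_lt (s : Letter g) : posArr s < 4 * g := by
  have hs := s.1.isLt
  simp only [posArr, posIn, posOut]
  split_ifs <;> omega

theorem natCast_gapN (s t : Letter g) : (gapN s t : ZMod 2) = kind t - kind s - 1 := by
  have two_dvd : 2 ∣ 4 * g := (by decide : 2 ∣ 4).mul_right g
  have four_mul : ((4 * g : ℕ) : ZMod 2) = 0 := (ZMod.natCast_eq_zero_iff _ _).2 two_dvd
  have no_truncation : posArr s + 1 ≤ posLv t + 4 * g := by
    have := posArr_lt s
    omega
  have drop_mod : (gapN s t : ZMod 2) = (posLv t + 4 * g - (posArr s + 1) : ℕ) :=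
    (ZMod.natCast_eq_natCast_iff _ _ _).2 ((Nat.mod_modEq _ _).of_dvd two_dvd)
  rw [drop_mod, Nat.cast_sub no_truncation, Nat.cast_add, four_mul, Nat.cast_add, Nat.cast_one,
    natCast_posLv, natCast_posArr]
  ring

end Letter

section Chain

variable {g : ℕ} {Y : Complex g}

/-- The kind of the first dart of a walk, with the junk value `0` on the empty walk. -/
def headKind (b : List Y.D) : ZMod 2 := b.head?.elim 0 fun d => kind (Y.dLet d)

/-- The kind of the last dart of a walk, with the junk value `0` on the empty walk. -/
def lastKind (b : List Y.D) : ZMod 2 := b.getLast?.elim 0 fun d => kind (Y.dLet d)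

theorem natCast_length_add_one_of_isBlock {b : List Y.D} (hb : Y.IsBlock b) :
    (b.length : ZMod 2) + 1 = -headKind b + lastKind b := by
  obtain ⟨hne, -, hc⟩ := hb
  have kind_flips : b.IsChain fun d d' => kind (Y.dLet d') = kind (Y.dLet d) + 1 :=
    hc.imp fun d d' ⟨_, hgap⟩ => by
      have := natCast_gapN (Y.dLet d) (Y.dLet d')
      rw [hgap, Nat.cast_zero] at this
      linear_combination -this
  have telescope := sum_map_neg_add_of_isChain hne kind_flips
  simp only [neg_add_cancel_left, List.map_const', List.sum_replicate, nsmul_one] at telescope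
  rw [telescope, headKind, lastKind, List.head?_eq_some_head hne, List.getLast?_eq_some_getLast hne,
    Option.elim_some, Option.elim_some]
  linear_combination CharTwo.add_self_eq_zero (1 : ZMod 2)

theorem headKind_eq_lastKind_of_chainStep {b b' : List Y.D} (h : Y.chainStep b b') :
    headKind b' = lastKind b := by
  obtain ⟨d, d', hd, hd', -, hgap⟩ := h
  have := natCast_gapN (Y.dLet d) (Y.dLet d')
  rw [hgap, Nat.cast_one] at this
  rw [headKind, lastKind, hd, hd', Option.elim_some, Option.elim_some]
  linear_combination CharTwo.add_self_eq_zero (1 : ZMod 2) - this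

theorem headKind_head_eq_lastKind_getLast {bs : List (List Y.D)} (hbs : Y.IsCyclicChain bs)
    (hne : bs ≠ []) : headKind (bs.head hne) = lastKind (bs.getLast hne) := by
  obtain ⟨-, b, b', hb, hb', hstep⟩ := hbs
  rw [List.getLast_of_getLast?_eq_some hb, List.head_of_head?_eq_some hb']
  exact headKind_eq_lastKind_of_chainStep hstep

theorem even_countP_even_length {bs : List (List Y.D)} (hbs : Y.IsCyclicChain bs) :
    Even ((bs.map List.length).countP (· % 2 == 0)) := by
  obtain ⟨hne, hblock, hchain⟩ := hbs.1
  rw [← ZMod.natCast_eq_zero_iff_even]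
  calc (((bs.map List.length).countP (· % 2 == 0) : ℕ) : ZMod 2)
      = (bs.map fun b => (b.length : ZMod 2) + 1).sum := by
        rw [natCast_countP_even, List.map_map, Function.comp_def]
    _ = (bs.map fun b => -headKind b + lastKind b).sum :=
        congrArg List.sum <| List.map_congr_left fun b hb =>
          natCast_length_add_one_of_isBlock (hblock b hb)
    _ = -headKind (bs.head hne) + lastKind (bs.getLast hne) :=
        sum_map_neg_add_of_isChain hne (hchain.imp fun _ _ => headKind_eq_lastKind_of_chainStep)
    _ = 0 := by rw [headKind_head_eq_lastKind_getLast hbs hne, neg_add_cancel]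

end Chain

theorem statement_1_general {g : ℕ} (hg : 0 < g) {Y : Complex g} {bs : List (List Y.D)}
    (hbs : Y.IsCyclicChain bs) :
    Even (bs.countP fun b => b.length % 2 == 0) ∧
    bs.map List.length ≠ [2 * g] ∧
    ∀ k : ℕ, bs.map List.length ≠ 2 * g :: List.replicate k (2 * g - 1) := by
  have even_count := even_countP_even_length hbs
  have not_one_even (k : ℕ) :
      bs.map List.length ≠ 2 * g :: List.replicate k (2 * g - 1) := fun h => by
    have odd_pred : Odd (2 * g - 1) := ⟨g - 1, by omega⟩
    rw [h, countP_even_cons_replicate (even_two_mul g) odd_pred] at even_count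
    exact Nat.not_even_one even_count
  exact ⟨by rwa [List.countP_map] at even_count, not_one_even 0, not_one_even⟩

/-- In every cyclic chain in a tiled surface, the number of
blocks of even length is even.  In particular there is no cyclic chain consisting
of a single block of length `2g`, and no cyclic chain with blocks of lengths
`2g, 2g−1, …, 2g−1`. -/
theorem statement_1 (g : ℕ) (hg : 2 ≤ g) (Y : Complex g) (hY : Y.IsTiledSurface)
    (bs : List (List Y.D)) (hbs : Y.IsCyclicChain bs) :
    Even (bs.countP fun b => b.length % 2 == 0) ∧
    bs.map List.length ≠ [2 * g] ∧
    ∀ k : ℕ, bs.map List.length ≠ 2 * g :: List.replicate k (2 * g - 1) :=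
  statement_1_general (by omega) hbs

end CS

end
end

section
/- Let g ≥ 2 and let Y be an at-most two-dimensional CW-complex with an assignment of both a direction and a label in {a_1, …, b_g} to each edge, satisfying properties P1 and P3. If the thick version of Y (constructed combinatorially via the ribbon-graph structure induced by the cyclic ordering of half-edges inherited from Σ_g) is boundary reduced, then Y also satisfies property P2 and hence is a tiled surface. -/
/-!
Formalization preamble for "Core Surfaces" (Magee–Puder).

We work with a fixed combinatorial (CW) model.  The surface `Σ_g` has one vertex,
`2g` directed labeled edges (the label `2i` plays the role of `a_{i+1}` and `2i+1`
the role of `b_{i+1}`), and one `4g`-gon glued along `[a₁,b₁]⋯[a_g,b_g]`.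

* `Gamma g` is the surface group, presented by the single relator.
* A `Complex g` is a combinatorial 2-complex with directed, labeled edges and
  2-cells given by their boundary walks; coverings of `Σ_g` are the complexes in
  which every vertex has exactly one incoming/outgoing edge of each label, every
  walk reading the relator is closed, and every closed walk reading the relator
  bounds exactly one face (`IsCovering`).  A tiled surface is a complex that
  embeds into such a covering (`IsTiledSurface`).
* Blocks, chains, boundary cycles (via the ribbon structure coming from the fixed
  cyclic order of the `4g` half-edges around a vertex of `Σ_g`), boundary-reduced
  and strongly boundary-reduced surfaces are defined combinatorially.
* Homotopy of edge-walks is the edge-path-group homotopy: backtrack insertions and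
  insertions of boundaries of (present) faces.
* `cover g J` is the covering space `J\~Σ_g` of `Σ_g` associated to a subgroup
  `J ≤ Γ_g` (vertices = right cosets), and `coreSub g J` is the core surface of
  `J`, defined exactly as in the paper: the union of all shortest representative
  cycles of essential free-homotopy classes, together with all components of the
  complement containing finitely many `4g`-gons.
-/

noncomputable section

namespace CS

/-
A word of length more than half of the relator that is read along the boundary of `Y` is a long
block. If there is none, glue a `4g`-gon along every maximal piece of polygon boundary occurring in
`Y`. Because the polygons have at least six sides and every vertex has at least four half-edges, a
polygon glued in this way shares with the previous stage and with its new neighbours at most half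
of its boundary, so the enlarged complex has no long blocks on its boundary either. The union of
all stages is complete: every vertex carries every dart and every polygon closes up. Its vertices
therefore form a `Γ_g`-set, which contains the vertices of `Y`, and a walk reading a word that is
trivial in `Γ_g` is closed. The Schreier graph of this set, with its polygons, is a covering of
`Σ_g` in which `Y` embeds.
-/

/-! ### Iterates of a relation -/

section Steps

variable {α β : Type*} {r : α → α → Prop} {r' : β → β → Prop} {m n n' N : ℕ} {a b b' c : α}

/-- The `n`-fold composite of the relation `r`: there is an `r`-path of length `n` from the first
point to the second. -/
def Steps (r : α → α → Prop) : ℕ → α → α → Prop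
  | 0, a, c => a = c
  | n + 1, a, c => ∃ b, r a b ∧ Steps r n b c

theorem steps_one : Steps r 1 a b ↔ r a b := by
  simp [Steps]

theorem steps_add : Steps r (m + n) a c ↔ ∃ b, Steps r m a b ∧ Steps r n b c := by
  induction m generalizing a with
  | zero => simp [Steps]
  | succ m ih =>
    simp only [Nat.succ_add, Steps, ih]
    tauto

theorem Steps.trans (h₁ : Steps r m a b) (h₂ : Steps r n b c) : Steps r (m + n) a c :=
  steps_add.2 ⟨b, h₁, h₂⟩

theorem steps_succ' : Steps r (n + 1) a c ↔ ∃ b, Steps r n a b ∧ r b c := by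
  simp only [steps_add, steps_one]

theorem steps_flip : Steps (flip r) n a b ↔ Steps r n b a := by
  induction n generalizing a with
  | zero => exact eq_comm
  | succ n ih =>
    exact (exists_congr fun c => (and_congr_right' ih).trans and_comm).trans steps_succ'.symm

theorem Steps.map {f : α → β} (hf : ∀ a b, r a b → r' (f a) (f b)) (h : Steps r n a b) :
    Steps r' n (f a) (f b) := by
  induction n generalizing a with
  | zero => exact congrArg f h
  | succ n ih =>
    obtain ⟨c, hac, hcb⟩ := h
    exact ⟨f c, hf a c hac, ih hcb⟩

theorem Steps.mono {s : α → α → Prop} (hrs : ∀ a b, r a b → s a b) (h : Steps r n a b) :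
    Steps s n a b :=
  h.map (f := id) hrs

theorem Steps.exists_of_map {f : α → β} (hf : ∀ a b, r' (f a) b → ∃ a', f a' = b ∧ r a a')
    {b : β} (h : Steps r' n (f a) b) : ∃ a', f a' = b ∧ Steps r n a a' := by
  induction n generalizing a with
  | zero => exact ⟨a, h, rfl⟩
  | succ n ih =>
    obtain ⟨_, hab, h⟩ := h
    obtain ⟨a₁, rfl, ha⟩ := hf a _ hab
    obtain ⟨a', rfl, h'⟩ := ih h
    exact ⟨a', rfl, a₁, ha, h'⟩

theorem Steps.exists_prefix (hmn : m ≤ n) (h : Steps r n a c) : ∃ b, Steps r m a b := by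
  obtain ⟨k, rfl⟩ := Nat.exists_eq_add_of_le hmn
  obtain ⟨b, hb, -⟩ := steps_add.1 h
  exact ⟨b, hb⟩

theorem Steps.right_unique (hr : Relator.RightUnique r) (h : Steps r n a b) (h' : Steps r n a b') :
    b = b' := by
  induction n generalizing a with
  | zero => exact h.symm.trans h'
  | succ n ih =>
    obtain ⟨c, hac, hcb⟩ := h
    obtain ⟨c', hac', hcb'⟩ := h'
    obtain rfl := hr hac hac'
    exact ih hcb hcb'

theorem Steps.closed (hr : Relator.RightUnique r) (h : Steps r n a b) (ha : Steps r N a a) :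
    Steps r N b b := by
  induction n generalizing a with
  | zero => exact h ▸ ha
  | succ n ih =>
    obtain ⟨c, hac, hcb⟩ := h
    refine ih hcb ?_
    cases N with
    | zero => rfl
    | succ N =>
      obtain ⟨c', hac', hca⟩ := ha
      obtain rfl := hr hac hac'
      exact steps_succ'.2 ⟨a, hca, hac⟩

theorem Steps.closed_iff (hr : Relator.BiUnique r) (h : Steps r n a b) :
    Steps r N a a ↔ Steps r N b b :=
  ⟨h.closed hr.2, fun hb => steps_flip.1 ((steps_flip.2 h).closed hr.1.flip (steps_flip.2 hb))⟩

theorem not_steps_closed_of_no_succ (hN : N ≠ 0) (ha : ∀ b, ¬ r a b) : ¬ Steps r N a a := by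
  obtain ⟨N, rfl⟩ := Nat.exists_eq_succ_of_ne_zero hN
  rintro ⟨b, hab, -⟩
  exact ha b hab

/-- An `r`-path of length `n` from `a` to `b` that can be prolonged at neither end. -/
structure MaxPath (r : α → α → Prop) (n : ℕ) (a b : α) : Prop where
  no_pred : ∀ c, ¬ r c a
  no_succ : ∀ c, ¬ r b c
  steps : Steps r n a b

theorem MaxPath.flip (h : MaxPath r n a b) : MaxPath (flip r) n b a :=
  ⟨h.no_succ, h.no_pred, steps_flip.2 h.steps⟩

theorem MaxPath.length_le (hr : Relator.RightUnique r) (h : MaxPath r n a b)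
    (h' : Steps r n' a b') : n' ≤ n := by
  by_contra! hlt
  obtain ⟨c, d, hac, hcd⟩ : ∃ c d, Steps r n a c ∧ r c d := by
    obtain ⟨d, hd⟩ := h'.exists_prefix (Nat.succ_le_of_lt hlt)
    obtain ⟨c, hac, hcd⟩ := steps_succ'.1 hd
    exact ⟨c, d, hac, hcd⟩
  obtain rfl := hac.right_unique hr h.steps
  exact h.no_succ d hcd

theorem MaxPath.right_unique (hr : Relator.RightUnique r) (h : MaxPath r n a b)
    (h' : MaxPath r n' a b') : n = n' ∧ b = b' := by
  obtain rfl : n = n' := le_antisymm (h'.length_le hr h.steps) (h.length_le hr h'.steps)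
  exact ⟨rfl, h.steps.right_unique hr h'.steps⟩

theorem MaxPath.left_unique (hr : Relator.LeftUnique r) {a' : α} (h : MaxPath r n a b)
    (h' : MaxPath r n' a' b) : n = n' ∧ a = a' :=
  h.flip.right_unique hr.flip h'.flip

theorem exists_maxPath_of_no_pred (ha : ∀ c, ¬ r c a) (hN : ∀ c, ¬ Steps r (N + 1) a c) :
    ∃ n ≤ N, ∃ b, MaxPath r n a b := by
  classical
  have hex : ∃ n, ∀ c, ¬ Steps r (n + 1) a c := ⟨N, hN⟩
  have hb : ∃ b, Steps r (Nat.find hex) a b := by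
    cases hn : Nat.find hex with
    | zero => exact ⟨a, rfl⟩
    | succ n => simpa using Nat.find_min hex (m := n) (by omega)
  obtain ⟨b, hb⟩ := hb
  exact ⟨Nat.find hex, Nat.find_min' hex hN, b, ha,
    fun c hbc => Nat.find_spec hex c (steps_succ'.2 ⟨b, hb, hbc⟩), hb⟩

theorem exists_maxPath_of_no_succ (hb : ∀ c, ¬ r b c) (hN : ∀ c, ¬ Steps r (N + 1) c b) :
    ∃ n ≤ N, ∃ a, MaxPath r n a b := by
  obtain ⟨n, hn, a, h⟩ := exists_maxPath_of_no_pred (r := _root_.flip r) hb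
    fun c hc => hN c (steps_flip.1 hc)
  exact ⟨n, hn, a, h.flip⟩

end Steps

/-! ### Partial tilings by polygons -/

/-- The local combinatorics of a surface tiled by `2 * half`-gons with at least four edges at each
vertex. The darts (directed edges) carry letters in `L`; `inv` is the letter of the reversed dart,
and `next s` is the letter read after `s` along the boundary of the polygon on the chosen side. -/
structure PolygonSystem (L : Type*) where
  next : Equiv.Perm L
  inv : L → L
  half : ℕ
  inv_inv : ∀ s, inv (inv s) = s
  three_le_half : 3 ≤ half
  next_pow : next ^ (2 * half) = 1
  turn_iterate_ne : ∀ s k, 0 < k → k < 4 → (fun t => next (inv t))^[k] s ≠ s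

namespace PolygonSystem

section PartialTiling

variable {L W : Type*} (S : PolygonSystem L) {R : W → L → W → Prop} {n : ℕ} {c d : W × L}

/-- The letter of the dart following `s` in the cyclic order of the darts leaving a vertex. -/
def turn (s : L) : L := S.next (S.inv s)

/-- The corner `(x, s)` is the polygon side leaving `x` with letter `s`. Given a labeled graph,
where `R x s y` says that the dart with letter `s` leads from `x` to `y`, this is the relation
taking a corner to the following one along the boundary of the polygon. -/
def Step (R : W → L → W → Prop) (c d : W × L) : Prop := R c.1 c.2 d.1 ∧ d.2 = S.next c.2

/-- The polygon boundary starting at the corner `c` is present and closes up. -/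
def OnFace (R : W → L → W → Prop) (c : W × L) : Prop := Steps (S.Step R) (2 * S.half) c c

/-- A labeled graph in which darts are determined by their origin and letter, and in which a path
along more than half of a polygon boundary is part of a closed polygon boundary. -/
structure IsPartialTiling (R : W → L → W → Prop) : Prop where
  symm : ∀ x s y, R x s y → R y (S.inv s) x
  det : ∀ x s y z, R x s y → R x s z → y = z
  closes : ∀ c d, Steps (S.Step R) (S.half + 1) c d → S.OnFace R c

/-- A labeled graph in which every dart exists and every polygon boundary closes up. -/
structure IsTiling (R : W → L → W → Prop) : Prop where
  symm : ∀ x s y, R x s y → R y (S.inv s) x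
  det : ∀ x s y z, R x s y → R x s z → y = z
  total : ∀ x s, ∃ y, R x s y
  onFace : ∀ c, S.OnFace R c

variable {S}

theorem turn_inv (s : L) : S.turn (S.inv s) = S.next s := by
  rw [turn, S.inv_inv]

theorem turn_ne (s : L) : S.turn s ≠ s :=
  S.turn_iterate_ne s 1 (by norm_num) (by norm_num)

theorem turn_turn_ne (s : L) : S.turn (S.turn s) ≠ s :=
  S.turn_iterate_ne s 2 (by norm_num) (by norm_num)

theorem turn_turn_turn_ne (s : L) : S.turn (S.turn (S.turn s)) ≠ s :=
  S.turn_iterate_ne s 3 (by norm_num) (by norm_num)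

theorem Step.mono {R' : W → L → W → Prop} (hRR' : ∀ x s y, R x s y → R' x s y)
    (h : S.Step R c d) : S.Step R' c d :=
  ⟨hRR' _ _ _ h.1, h.2⟩

theorem snd_of_steps (h : Steps (S.Step R) n c d) : d.2 = (S.next ^ n) c.2 := by
  induction n generalizing c with
  | zero => rw [← show c = d from h, pow_zero, Equiv.Perm.one_apply]
  | succ n ih =>
    obtain ⟨e, hce, hed⟩ := h
    rw [ih hed, hce.2, pow_succ, Equiv.Perm.mul_apply]

theorem step_rightUnique (det : ∀ x s y z, R x s y → R x s z → y = z) :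
    Relator.RightUnique (S.Step R) :=
  fun _ _ _ h h' => Prod.ext (det _ _ _ _ h.1 h'.1) (h.2.trans h'.2.symm)

theorem step_biUnique (symm : ∀ x s y, R x s y → R y (S.inv s) x)
    (det : ∀ x s y z, R x s y → R x s z → y = z) : Relator.BiUnique (S.Step R) := by
  refine ⟨fun c c' d h h' => ?_, step_rightUnique det⟩
  have hs : c.2 = c'.2 := S.next.injective (h.2.symm.trans h'.2)
  exact Prod.ext (det _ _ _ _ (symm _ _ _ h.1) (hs ▸ symm _ _ _ h'.1)) hs

theorem forall_not_step_iff : (∀ d, ¬ S.Step R c d) ↔ ∀ y, ¬ R c.1 c.2 y :=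
  ⟨fun h y hy => h (y, S.next c.2) ⟨hy, rfl⟩, fun h d hd => h d.1 hd.1⟩

theorem forall_not_step_turn_iff (symm : ∀ x s y, R x s y → R y (S.inv s) x) {x : W} {s : L} :
    (∀ c, ¬ S.Step R c (x, S.turn s)) ↔ ∀ y, ¬ R x s y := by
  refine ⟨fun h y hy => h (y, S.inv s) ⟨symm _ _ _ hy, rfl⟩, fun h c hc => h c.1 ?_⟩
  have hs : S.inv s = c.2 := S.next.injective hc.2
  simpa only [← hs, S.inv_inv] using symm _ _ _ hc.1

namespace IsPartialTiling

variable (hR : S.IsPartialTiling R)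
include hR

theorem biUnique : Relator.BiUnique (S.Step R) := step_biUnique hR.symm hR.det

theorem exists_maxPath_from (hc : ∀ d, ¬ S.Step R d c) :
    ∃ b ≤ S.half, ∃ d, MaxPath (S.Step R) b c d := by
  refine exists_maxPath_of_no_pred hc fun d hd => ?_
  exact not_steps_closed_of_no_succ (by have := S.three_le_half; omega) hc
    (steps_flip.2 (hR.closes c d hd))

theorem exists_maxPath_to (hd : ∀ c, ¬ S.Step R d c) :
    ∃ b ≤ S.half, ∃ c, MaxPath (S.Step R) b c d := by
  refine exists_maxPath_of_no_succ hd fun c hc => ?_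
  exact not_steps_closed_of_no_succ (by have := S.three_le_half; omega) hd
    (hc.closed hR.biUnique.2 (hR.closes c d hc))

theorem maxPath_length_le {b : ℕ} (h : MaxPath (S.Step R) b c d) : b ≤ S.half := by
  obtain ⟨b', hb', d', h'⟩ := hR.exists_maxPath_from h.no_pred
  exact (h.right_unique hR.biUnique.2 h').1 ▸ hb'

end IsPartialTiling

end PartialTiling

/-! ### Adding a layer of polygons -/

/-- The vertices of the tiling built around a graph with vertex set `V`: the vertices of that
graph, and those added in layers. For the polygon that layer `n` glues on starting from the corner
`(x, s)`, `fresh n x s i` is the `i`-th new vertex on its boundary. -/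
inductive Vertex (V L : Type*)
  | base (v : V)
  | fresh (n : ℕ) (x : Vertex V L) (s : L) (i : ℕ)

/-- The number of layers after which a vertex is present. -/
def Vertex.rank {V L : Type*} : Vertex V L → ℕ
  | base _ => 0
  | fresh n _ _ _ => n + 1

section Layer

variable {V L : Type*} (S : PolygonSystem L) (n : ℕ)
  (R : Vertex V L → L → Vertex V L → Prop) {b i j : ℕ} {c d : Vertex V L × L}
  {u v : Vertex V L} {s : L}

/-- The labeled graph `R` is a partial tiling that only involves vertices present after `n`
layers. -/
structure IsStage : Prop extends S.IsPartialTiling R where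
  rank_le : ∀ u s v, R u s v → u.rank ≤ n ∧ v.rank ≤ n

/-- A gap in the partial tiling `R`, to be filled by the polygon of layer `n` at the corner `c`: a
maximal boundary path from the corner `c` to the corner `d`, made of `b` sides. -/
structure Gap (b : ℕ) (c d : Vertex V L × L) : Prop extends MaxPath (S.Step R) b c d where
  rank_le : c.1.rank ≤ n

/-- The number of new vertices of a polygon that is glued onto `b` old sides. Its two sides that are
adjacent to the old ones are shared with the polygons filling the neighbouring gaps, and the new
vertex at the far end of the gap is counted for the neighbour. -/
def arcLength (b : ℕ) : ℕ := 2 * S.half - 2 - b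

/-- The vertices along the new sides of the polygon that fills the gap from `c` to `d`, numbered
against the boundary orientation of the polygon, from `c.1` up to the neighbour of `d.1`. -/
def arc (b : ℕ) (c d : Vertex V L × L) : ℕ → Vertex V L
  | 0 => c.1
  | i + 1 => if i < S.arcLength b then .fresh n c.1 c.2 i else .fresh n d.1 (S.turn d.2) 0

/-- The darts along the new sides of the polygons of layer `n`, in their boundary orientation. The
side leaving the end `d.1` of a gap is omitted: reversed, it is the last side of the polygon that
fills the gap starting at `d.1`. -/
def NewDart (u : Vertex V L) (s : L) (v : Vertex V L) : Prop :=
  ∃ b c d i, S.Gap n R b c d ∧ i ≤ S.arcLength b ∧ (S.next ^ (i + 1)) s = c.2 ∧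
    u = S.arc n b c d (i + 1) ∧ v = S.arc n b c d i

/-- The labeled graph obtained from `R` by gluing a polygon onto every gap. -/
def layer (u : Vertex V L) (s : L) (v : Vertex V L) : Prop :=
  R u s v ∨ S.NewDart n R u s v ∨ S.NewDart n R v (S.inv s) u

variable {S n R}

theorem arc_succ_of_lt (hi : i < S.arcLength b) :
    S.arc n b c d (i + 1) = .fresh n c.1 c.2 i := if_pos hi

theorem arc_arcLength_succ :
    S.arc n b c d (S.arcLength b + 1) = .fresh n d.1 (S.turn d.2) 0 := if_neg (lt_irrefl _)

theorem rank_arc_succ : (S.arc n b c d (i + 1)).rank = n + 1 := by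
  rw [arc]
  split_ifs <;> rfl

theorem layer_symm (hR : S.IsStage n R) (u : Vertex V L) (s : L) (v : Vertex V L) :
    S.layer n R u s v → S.layer n R v (S.inv s) u := by
  rintro (h | h | h)
  · exact Or.inl (hR.symm _ _ _ h)
  · exact Or.inr (Or.inr (by rwa [S.inv_inv]))
  · exact Or.inr (Or.inl h)

theorem rank_le_of_layer (hR : S.IsStage n R)
    (h : S.layer n R u s v) : u.rank ≤ n + 1 ∧ v.rank ≤ n + 1 := by
  have of_new {u s v} : S.NewDart n R u s v → u.rank ≤ n + 1 ∧ v.rank ≤ n + 1 := by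
    rintro ⟨b, c, d, i, hgap, -, -, rfl, rfl⟩
    refine ⟨rank_arc_succ.le, ?_⟩
    cases i with
    | zero => exact hgap.rank_le.trans n.le_succ
    | succ i => exact rank_arc_succ.le
  rcases h with h | h | h
  · exact (hR.rank_le _ _ _ h).imp Nat.le_succ_of_le Nat.le_succ_of_le
  · exact of_new h
  · exact (of_new h).symm

namespace Gap

theorem arcLength_pos (hR : S.IsStage n R) (hgap : S.Gap n R b c d) :
    0 < S.arcLength b := by
  have := hR.maxPath_length_le hgap.toMaxPath
  have := S.three_le_half
  rw [arcLength]
  omega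

theorem length_add (hR : S.IsStage n R) (hgap : S.Gap n R b c d) :
    b + (1 + (S.arcLength b + 1)) = 2 * S.half := by
  have := hgap.arcLength_pos hR
  rw [arcLength] at this ⊢
  omega

theorem rank_end_le (hR : S.IsStage n R)
    (hgap : S.Gap n R b c d) : d.1.rank ≤ n := by
  have hsteps := hgap.steps
  cases b with
  | zero =>
    obtain rfl : c = d := hsteps
    exact hgap.rank_le
  | succ b =>
    obtain ⟨e, -, hed⟩ := steps_succ'.1 hsteps
    exact (hR.rank_le _ _ _ hed.1).2

theorem next_pow_end (hR : S.IsStage n R) (hgap : S.Gap n R b c d) :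
    (S.next ^ (S.arcLength b + 1)) (S.next d.2) = c.2 := by
  have hlen := hgap.length_add hR
  rw [snd_of_steps hgap.steps, ← Equiv.Perm.mul_apply, ← Equiv.Perm.mul_apply, ← pow_succ,
    ← pow_add, show S.arcLength b + 1 + 1 + b = 2 * S.half by omega, S.next_pow,
    Equiv.Perm.one_apply]

end Gap

theorem exists_gap_from (hR : S.IsStage n R) (hc : c.1.rank ≤ n)
    (hno : ∀ e, ¬ S.Step R e c) : ∃ b d, S.Gap n R b c d := by
  obtain ⟨b, -, d, h⟩ := hR.exists_maxPath_from hno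
  exact ⟨b, d, h, hc⟩

theorem exists_gap_to (hR : S.IsStage n R) (hd : d.1.rank ≤ n)
    (hno : ∀ e, ¬ S.Step R d e) : ∃ b c, S.Gap n R b c d := by
  obtain ⟨b, -, c, h⟩ := hR.exists_maxPath_to hno
  refine ⟨b, c, h, ?_⟩
  have hsteps := h.steps
  cases b with
  | zero =>
    obtain rfl : c = d := hsteps
    exact hd
  | succ b =>
    obtain ⟨e, hce, -⟩ := hsteps
    exact (hR.rank_le _ _ _ hce.1).1

theorem layer_of_rank_le (hR : S.IsStage n R) (hu : u.rank ≤ n) (h : S.layer n R u s v) :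
    R u s v ∨ (∀ y, ¬ R u s y) ∧ v = .fresh n u (S.turn s) 0 := by
  rcases h with h | ⟨b, c, d, i, -, -, -, rfl, -⟩ | ⟨b, c, d, i, hgap, -, hs, rfl, rfl⟩
  · exact Or.inl h
  · exact absurd hu (by rw [rank_arc_succ]; omega)
  · cases i with
    | succ i => exact absurd hu (by rw [rank_arc_succ]; omega)
    | zero =>
      have hc : c = (c.1, S.turn s) := Prod.ext rfl (by rw [← hs, zero_add, pow_one, turn])
      refine Or.inr ⟨(forall_not_step_turn_iff hR.symm).1 (hc ▸ hgap.no_pred), ?_⟩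
      rw [arc_succ_of_lt (hgap.arcLength_pos hR), hc]
      rfl

/-- The possible darts with letter `s` from the new vertex `fresh n c.1 c.2 i` to `v`: down its own
arc, up its own arc, or, when it starts its own arc, along the last side of the neighbouring
polygon. -/
inductive FreshDart (S : PolygonSystem L) (n : ℕ) (R : Vertex V L → L → Vertex V L → Prop) :
    Vertex V L × L → ℕ → L → Vertex V L → Prop
  | down {b i : ℕ} {c d : Vertex V L × L} {s : L} (hgap : S.Gap n R b c d)
    (hs : (S.next ^ (i + 1)) s = c.2) : FreshDart S n R c i s (S.arc n b c d i)
  | up {b i : ℕ} {c d : Vertex V L × L} {s : L} (hgap : S.Gap n R b c d)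
    (hs : (S.next ^ (i + 2)) (S.inv s) = c.2) : FreshDart S n R c i s (S.arc n b c d (i + 2))
  | side {b : ℕ} {c d e : Vertex V L × L} {s : L} (hgap : S.Gap n R b c d)
    (he : e = (d.1, S.turn d.2)) (hs : s = S.next d.2) :
    FreshDart S n R e 0 s (S.arc n b c d (S.arcLength b))

theorem freshDart_of_layer (hR : S.IsStage n R) {x : Vertex V L} {t : L}
    (h : S.layer n R (.fresh n x t i) s v) : FreshDart S n R (x, t) i s v := by
  rcases h with h | ⟨b, c, d, j, hgap, hj, hs, hu, rfl⟩ | ⟨b, c, d, j, hgap, hj, hs, rfl, hu⟩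
  · exact absurd (hR.rank_le _ _ _ h).1 (Nat.not_succ_le_self n)
  · rcases hj.lt_or_eq with hj | rfl
    · rw [arc_succ_of_lt hj] at hu
      cases hu
      exact .down hgap hs
    · rw [arc_arcLength_succ] at hu
      cases hu
      obtain rfl : s = S.next d.2 := (S.next ^ _).injective (hs.trans (hgap.next_pow_end hR).symm)
      exact .side hgap rfl rfl
  · cases j with
    | zero =>
      have hu : Vertex.fresh n x t i = c.1 := hu
      exact absurd hgap.rank_le (hu ▸ Nat.not_succ_le_self n)
    | succ j =>
      rw [arc_succ_of_lt hj] at hu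
      cases hu
      exact .up hgap hs

theorem FreshDart.det (hR : S.IsStage n R) {v' : Vertex V L}
    (h : FreshDart S n R c i s v) (h' : FreshDart S n R c i s v') : v = v' := by
  have down_ne_up {s t : L} {i : ℕ} (hd : (S.next ^ (i + 1)) s = t)
      (hu : (S.next ^ (i + 2)) (S.inv s) = t) : False := by
    rw [← hu, pow_succ _ (i + 1), Equiv.Perm.mul_apply] at hd
    exact S.turn_ne s ((S.next ^ (i + 1)).injective hd).symm
  have down_ne_side {q : L} (hd : (S.next ^ (0 + 1)) (S.next q) = S.turn q) : False := by
    have hq : S.next q = S.inv q := by simpa [turn] using hd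
    exact S.turn_ne (S.inv q) (by rw [turn_inv, hq])
  have up_ne_side {q : L} (hu : (S.next ^ (0 + 2)) (S.inv (S.next q)) = S.turn q) : False := by
    have hq : S.turn (S.next q) = S.inv q := by simpa [pow_succ, turn] using hu
    exact S.turn_turn_ne (S.inv q) (by rw [turn_inv, hq])
  cases h with
  | down hgap hs => cases h' with
    | down hgap' hs' =>
      obtain ⟨rfl, rfl⟩ := hgap.right_unique hR.biUnique.2 hgap'.toMaxPath
      rfl
    | up hgap' hs' => exact (down_ne_up hs hs').elim
    | side hgap' he hs' => subst he hs'; exact (down_ne_side hs).elim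
  | up hgap hs => cases h' with
    | down hgap' hs' => exact (down_ne_up hs' hs).elim
    | up hgap' hs' =>
      obtain ⟨rfl, rfl⟩ := hgap.right_unique hR.biUnique.2 hgap'.toMaxPath
      rfl
    | side hgap' he hs' => subst he hs'; exact (up_ne_side hs).elim
  | @side _ _ d _ _ hgap he hs => cases h' with
    | down hgap' hs' => subst he hs; exact (down_ne_side hs').elim
    | up hgap' hs' => subst he hs; exact (up_ne_side hs').elim
    | @side _ _ d' _ _ hgap' he' hs' =>
      obtain rfl : d = d' :=
        Prod.ext (congrArg Prod.fst (he.symm.trans he') :) (S.next.injective (hs.symm.trans hs'))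
      obtain ⟨rfl, rfl⟩ := hgap.left_unique hR.biUnique.1 hgap'.toMaxPath
      rfl

theorem layer_det (hR : S.IsStage n R) (u : Vertex V L) (s : L)
    (v v' : Vertex V L) (h : S.layer n R u s v) (h' : S.layer n R u s v') : v = v' := by
  by_cases hu : u.rank ≤ n
  · rcases layer_of_rank_le hR hu h with h | ⟨hno, rfl⟩ <;>
      rcases layer_of_rank_le hR hu h' with h' | ⟨hno', rfl⟩
    · exact hR.det _ _ _ _ h h'
    · exact absurd h (hno' v)
    · exact absurd h' (hno v')
    · rfl
  · have hu' : u.rank = n + 1 := le_antisymm (rank_le_of_layer hR h).1 (not_le.1 hu)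
    cases u with
    | base => cases hu'
    | fresh m x t i =>
      obtain rfl : m = n := Nat.succ_injective hu'
      exact (freshDart_of_layer hR h).det hR (freshDart_of_layer hR h')

theorem layer_biUnique (hR : S.IsStage n R) :
    Relator.BiUnique (S.Step (S.layer n R)) :=
  step_biUnique (layer_symm hR) (layer_det hR)

namespace Gap

theorem steps_arc (hgap : S.Gap n R b c d) :
    ∀ j ≤ S.arcLength b + 1, ∀ s, (S.next ^ j) s = c.2 →
      Steps (S.Step (S.layer n R)) j (S.arc n b c d j, s) c
  | 0, _, s, hs => Prod.ext rfl hs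
  | j + 1, hj, s, hs =>
    ⟨(S.arc n b c d j, S.next s),
      ⟨Or.inr (Or.inl ⟨b, c, d, j, hgap, by omega, hs, rfl, rfl⟩), rfl⟩,
      hgap.steps_arc j (by omega) (S.next s) (by rwa [← Equiv.Perm.mul_apply, ← pow_succ])⟩

theorem onFace_start (hR : S.IsStage n R) (hgap : S.Gap n R b c d) :
    S.OnFace (S.layer n R) c := by
  have hlast : S.Step (S.layer n R) d (S.arc n b c d (S.arcLength b + 1), S.next d.2) := by
    have hno : ∀ e, ¬ S.Step R e (d.1, S.turn d.2) :=
      (forall_not_step_turn_iff hR.symm).2 (forall_not_step_iff.1 hgap.no_succ)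
    have hd : d.1.rank ≤ n := hgap.rank_end_le hR
    obtain ⟨b', d', hgap'⟩ := exists_gap_from (c := (d.1, S.turn d.2)) hR hd hno
    refine ⟨Or.inr (Or.inr ⟨b', _, d', 0, hgap', Nat.zero_le _, ?_, ?_, rfl⟩), rfl⟩
    · rw [zero_add, pow_one, turn]
    · rw [arc_arcLength_succ, arc_succ_of_lt (hgap'.arcLength_pos hR)]
  rw [OnFace, ← hgap.length_add hR]
  exact (hgap.steps.mono fun _ _ => Step.mono fun _ _ _ => Or.inl).trans
    ((steps_one.2 hlast).trans (hgap.steps_arc _ le_rfl _ (hgap.next_pow_end hR)))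

theorem onFace_arc (hR : S.IsStage n R) (hgap : S.Gap n R b c d)
    (hj : j ≤ S.arcLength b + 1) (hs : (S.next ^ j) s = c.2) :
    S.OnFace (S.layer n R) (S.arc n b c d j, s) :=
  ((hgap.steps_arc j hj s hs).closed_iff (layer_biUnique hR)).2 (hgap.onFace_start hR)

theorem onFace_end (hR : S.IsStage n R) (hgap : S.Gap n R b c d) :
    S.OnFace (S.layer n R) d :=
  (hgap.steps.mono fun _ _ => Step.mono fun _ _ _ => Or.inl).closed
    (layer_biUnique hR).2 (hgap.onFace_start hR)

end Gap

/-- A dart that follows the new side of a polygon of layer `n` against its boundary orientation,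
and does not leave an old vertex. -/
def OuterDart (S : PolygonSystem L) (n : ℕ) (R : Vertex V L → L → Vertex V L → Prop)
    (u : Vertex V L) (s : L) (v : Vertex V L) : Prop :=
  ∃ b c d i, S.Gap n R b c d ∧ i < S.arcLength b ∧ (S.next ^ (i + 2)) (S.inv s) = c.2 ∧
    u = S.arc n b c d (i + 1) ∧ v = S.arc n b c d (i + 2)

theorem layer_trichotomy (hR : S.IsStage n R) (h : S.layer n R u s v) :
    R u s v ∨ S.OnFace (S.layer n R) (u, s) ∨ OuterDart S n R u s v := by
  rcases h with h | ⟨b, c, d, i, hgap, hi, hs, rfl, rfl⟩ | ⟨b, c, d, i, hgap, hi, hs, rfl, rfl⟩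
  · exact Or.inl h
  · exact Or.inr (Or.inl (hgap.onFace_arc hR (by omega) hs))
  · cases i with
    | zero =>
      have hc : c = (c.1, S.turn s) := Prod.ext rfl (by rw [← hs, zero_add, pow_one, turn])
      have hno : ∀ e, ¬ S.Step R (c.1, s) e :=
        forall_not_step_iff.2 ((forall_not_step_turn_iff hR.symm).1 (hc ▸ hgap.no_pred))
      obtain ⟨b', c', hgap'⟩ := exists_gap_to (d := (c.1, s)) hR hgap.rank_le hno
      exact Or.inr (Or.inl (hgap'.onFace_end hR))
    | succ i => exact Or.inr (Or.inr ⟨b, c, d, i, hgap, hi, hs, rfl, rfl⟩)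

theorem OuterDart.rank_eq (h : OuterDart S n R u s v) : u.rank = n + 1 ∧ v.rank = n + 1 := by
  obtain ⟨b, c, d, i, -, -, -, rfl, rfl⟩ := h
  exact ⟨rank_arc_succ, rank_arc_succ⟩

theorem OuterDart.not_outerDart_next (hR : S.IsStage n R) {w : Vertex V L}
    (h : OuterDart S n R u s v) : ¬ OuterDart S n R v (S.next s) w := by
  obtain ⟨b, c, d, i, hgap, hi, hs, -, rfl⟩ := h
  rintro ⟨b', c', d', i', hgap', hi', hs', hv, -⟩
  rw [arc_succ_of_lt hi'] at hv
  rcases (Nat.succ_le_of_lt hi).lt_or_eq with hi | hi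
  · rw [arc_succ_of_lt hi] at hv
    obtain ⟨-, -, hc, rfl⟩ := Vertex.fresh.inj hv
    rw [← hc, ← hs, pow_succ _ (i + 2), Equiv.Perm.mul_apply] at hs'
    have hturn : S.turn (S.next s) = S.inv s := (S.next ^ (i + 2)).injective hs'
    exact S.turn_turn_ne (S.inv s) (by rw [turn_inv, hturn])
  · rw [show i + 2 = S.arcLength b + 1 by omega] at hs hv
    rw [arc_arcLength_succ] at hv
    obtain ⟨-, -, hc, rfl⟩ := Vertex.fresh.inj hv
    have hinv : S.inv s = S.next d.2 :=
      (S.next ^ _).injective (hs.trans (hgap.next_pow_end hR).symm)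
    have hturn : S.turn (S.next s) = S.inv d.2 := by simpa [pow_succ, turn, ← hc] using hs'
    refine S.turn_turn_turn_ne (S.inv d.2) ?_
    rw [turn_inv, ← hinv, turn_inv, hturn]

theorem step_layer_step (hR : S.IsStage n R) {p q r : Vertex V L × L}
    (hpq : S.Step (S.layer n R) p q) (hqr : S.Step (S.layer n R) q r) :
    (S.Step R p q ∧ S.Step R q r) ∨ S.OnFace (S.layer n R) p := by
  have onFace_of_onFace : S.OnFace (S.layer n R) q → S.OnFace (S.layer n R) p :=
    ((steps_one.2 hpq).closed_iff (layer_biUnique hR)).2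
  rcases layer_trichotomy hR hpq.1 with hp | hp | hp
  · rcases layer_trichotomy hR hqr.1 with hq | hq | hq
    · exact Or.inl ⟨⟨hp, hpq.2⟩, hq, hqr.2⟩
    · exact Or.inr (onFace_of_onFace hq)
    · have := (hR.rank_le _ _ _ hp).2
      have := hq.rank_eq.1
      omega
  · exact Or.inr hp
  · rcases layer_trichotomy hR hqr.1 with hq | hq | hq
    · have := (hR.rank_le _ _ _ hq).1
      have := hp.rank_eq.2
      omega
    · exact Or.inr (onFace_of_onFace hq)
    · exact absurd (hpq.2 ▸ hq) (hp.not_outerDart_next hR)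

theorem steps_layer (hR : S.IsStage n R) {k : ℕ} {p r : Vertex V L × L}
    (h : Steps (S.Step (S.layer n R)) (k + 2) p r) :
    Steps (S.Step R) (k + 2) p r ∨ S.OnFace (S.layer n R) p := by
  induction k generalizing p with
  | zero =>
    obtain ⟨q, hpq, r', hqr, rfl⟩ := h
    exact (step_layer_step hR hpq hqr).imp_left fun h => ⟨q, h.1, r', h.2, rfl⟩
  | succ k ih =>
    obtain ⟨q, hpq, q', hqq', htail⟩ := h
    rcases step_layer_step hR hpq hqq' with ⟨hp, -⟩ | hp
    · rcases ih ⟨q', hqq', htail⟩ with hq | hq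
      · exact Or.inl ⟨q, hp, hq⟩
      · exact Or.inr (((steps_one.2 hpq).closed_iff (layer_biUnique hR)).2 hq)
    · exact Or.inr hp

theorem isStage_layer (hR : S.IsStage n R) :
    S.IsStage (n + 1) (S.layer n R) where
  symm := layer_symm hR
  det := layer_det hR
  rank_le _ _ _ := rank_le_of_layer hR
  closes p r h := by
    have hhalf : S.half + 1 = S.half - 1 + 2 := by have := S.three_le_half; omega
    rw [hhalf] at h
    rcases steps_layer hR h with h | h
    · exact (hR.closes p r (hhalf ▸ h)).mono fun _ _ => Step.mono fun _ _ _ => Or.inl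
    · exact h

theorem exists_layer_of_rank_le (hR : S.IsStage n R) (hu : u.rank ≤ n) (s : L) :
    ∃ v, S.layer n R u s v := by
  by_cases h : ∃ v, R u s v
  · exact h.imp fun _ => Or.inl
  · push Not at h
    obtain ⟨b, d, hgap⟩ :=
      exists_gap_from (c := (u, S.turn s)) hR hu ((forall_not_step_turn_iff hR.symm).2 h)
    exact ⟨_, Or.inr (Or.inr ⟨b, _, d, 0, hgap, Nat.zero_le _, by rw [zero_add, pow_one, turn],
      rfl, rfl⟩)⟩

end Layer

/-! ### The limit tiling -/

section Tower

variable {V L : Type*} (S : PolygonSystem L) {R₀ : V → L → V → Prop}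

/-- The image of a labeled graph on `V` in the vertices of rank `0`. -/
inductive baseGraph (R₀ : V → L → V → Prop) : Vertex V L → L → Vertex V L → Prop
  | intro {x : V} {s : L} {y : V} (h : R₀ x s y) : baseGraph R₀ (.base x) s (.base y)

/-- The labeled graph obtained after gluing on `n` layers of polygons. -/
def tower (R₀ : V → L → V → Prop) : ℕ → Vertex V L → L → Vertex V L → Prop
  | 0 => baseGraph R₀
  | n + 1 => S.layer n (tower R₀ n)

variable {S}

theorem isStage_baseGraph (h : S.IsPartialTiling R₀) : S.IsStage 0 (baseGraph R₀) where
  symm := by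
    rintro _ _ _ ⟨hxy⟩
    exact ⟨h.symm _ _ _ hxy⟩
  det := by
    rintro _ _ _ _ ⟨hxy⟩ hxz
    cases hxz with
    | intro hxz => rw [h.det _ _ _ _ hxy hxz]
  closes := by
    rintro ⟨_, s⟩ d hcd
    obtain ⟨⟨_, _⟩, ⟨⟨-⟩, -⟩, -⟩ := id hcd
    obtain ⟨d', -, hd'⟩ := hcd.exists_of_map (f := Prod.map Vertex.base id) (a := (_, s))
        (r := S.Step R₀) <| by
      rintro ⟨x, s⟩ ⟨_, t⟩ ⟨⟨hxy⟩, ht⟩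
      exact ⟨(_, t), rfl, hxy, ht⟩
    exact (h.closes _ _ hd').map (f := Prod.map Vertex.base id)
      fun _ _ hstep => ⟨⟨hstep.1⟩, hstep.2⟩
  rank_le := by
    rintro _ _ _ ⟨-⟩
    exact ⟨le_rfl, le_rfl⟩

theorem isStage_tower (h : S.IsPartialTiling R₀) : ∀ n, S.IsStage n (S.tower R₀ n)
  | 0 => isStage_baseGraph h
  | n + 1 => isStage_layer (isStage_tower h n)

theorem tower_mono {m n : ℕ} (hmn : m ≤ n) {u : Vertex V L} {s : L} {v : Vertex V L}
    (h : S.tower R₀ m u s v) : S.tower R₀ n u s v := by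
  induction hmn with
  | refl => exact h
  | step _ ih => exact Or.inl ih

theorem exists_tower (h : S.IsPartialTiling R₀) (u : Vertex V L) (s : L) :
    ∃ n v, S.tower R₀ n u s v :=
  ⟨u.rank + 1, exists_layer_of_rank_le (isStage_tower h u.rank) le_rfl s⟩

theorem exists_steps_tower (h : S.IsPartialTiling R₀) (k : ℕ) (c : Vertex V L × L) :
    ∃ n d, Steps (S.Step (S.tower R₀ n)) k c d := by
  induction k with
  | zero => exact ⟨0, c, rfl⟩
  | succ k ih =>
    obtain ⟨n, d, hcd⟩ := ih
    obtain ⟨m, v, hv⟩ := exists_tower h d.1 d.2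
    exact ⟨max n m, (v, S.next d.2), steps_succ'.2
      ⟨d, hcd.mono fun _ _ => Step.mono fun _ _ _ => tower_mono (le_max_left n m),
        tower_mono (le_max_right n m) hv, rfl⟩⟩

theorem isTiling_iSup_tower (h : S.IsPartialTiling R₀) :
    S.IsTiling fun u s v => ∃ n, S.tower R₀ n u s v where
  symm u s v := fun ⟨n, hn⟩ => ⟨n, (isStage_tower h n).symm u s v hn⟩
  det u s v v' := fun ⟨n, hn⟩ ⟨m, hm⟩ => (isStage_tower h (max n m)).det u s v v'
    (tower_mono (le_max_left n m) hn) (tower_mono (le_max_right n m) hm)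
  total u s := let ⟨n, v, hv⟩ := exists_tower h u s; ⟨v, n, hv⟩
  onFace c := by
    obtain ⟨n, d, hcd⟩ := exists_steps_tower h (S.half + 1) c
    exact ((isStage_tower h n).closes c d hcd).mono fun _ _ => Step.mono fun _ _ _ h => ⟨n, h⟩

theorem IsPartialTiling.exists_isTiling (h : S.IsPartialTiling R₀) :
    ∃ T : Vertex V L → L → Vertex V L → Prop,
      S.IsTiling T ∧ ∀ x s y, R₀ x s y → T (.base x) s (.base y) :=
  ⟨_, isTiling_iSup_tower h, fun _ _ _ hxy => ⟨0, ⟨hxy⟩⟩⟩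

end Tower

end PolygonSystem

/-! ### The cyclic order of the letters -/

section Letters

variable {g : ℕ}

/-- The signed letters in the order in which they occur in the relator, each exactly once. -/
def relatorEquiv (g : ℕ) : Fin (4 * g) ≃ Letter g where
  toFun p := (relLabel g p, relSign g p)
  invFun s := ⟨4 * (s.1 / 2) + s.1 % 2 + if s.2 then 0 else 2, by
    have := s.1.2
    split <;> omega⟩
  left_inv p := by
    simp only [relLabel, relSign, decide_eq_true_eq, Fin.ext_iff]
    split <;> omega
  right_inv := by
    rintro ⟨ℓ, _ | _⟩ <;>
      simp only [relLabel, relSign, Prod.mk.injEq, Fin.ext_iff, decide_eq_false_iff_not,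
        decide_eq_true_eq, Bool.false_eq_true, if_true, if_false] <;> omega

/-- The cyclic successor of a letter in the relator. -/
def nextLetter (g : ℕ) : Equiv.Perm (Letter g) :=
  (relatorEquiv g).permCongrHom (finRotate (4 * g))

/-- The letter read by the reversed dart. -/
def invLetter (s : Letter g) : Letter g := (s.1, !s.2)

theorem relatorEquiv_symm_nextLetter (s : Letter g) :
    ((relatorEquiv g).symm (nextLetter g s) : ℕ) =
      ((relatorEquiv g).symm s + 1) % (4 * g) := by
  have : NeZero (4 * g) := ((relatorEquiv g).symm s).neZero
  simp [nextLetter, Fin.val_add]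

theorem nextLetter_pow (hg : g ≠ 0) : nextLetter g ^ (4 * g) = 1 := by
  have h : 2 ≤ 4 * g := by omega
  have hord : orderOf (finRotate (4 * g)) = 4 * g := by
    rw [(isCycle_finRotate_of_le h).orderOf, support_finRotate_of_le h, Finset.card_univ,
      Fintype.card_fin]
  rw [nextLetter, ← map_pow, ← congrArg (finRotate (4 * g) ^ ·) hord, pow_orderOf_eq_one, map_one]

theorem relatorWord_eq_iterate (hg : g ≠ 0) :
    ∃ s, relatorWord g = List.iterate (nextLetter g) s (4 * g) := by
  have : NeZero (4 * g) := ⟨by omega⟩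
  refine ⟨relatorEquiv g 0, List.ext_getElem (by simp [relatorWord]) fun i hi _ => ?_⟩
  have hi : i < 4 * g := by simpa [relatorWord] using hi
  have hrot : (finRotate (4 * g))^[i] 0 = ⟨i, hi⟩ := by
    rw [← finCycle_eq_finRotate_iterate (k := ⟨i, hi⟩), finCycle_apply, zero_add]
  have hconj : Function.Semiconj (relatorEquiv g) (finRotate (4 * g)) (nextLetter g) := fun p => by
    simp [nextLetter]
  rw [List.getElem_iterate, ← hconj.iterate_right i 0, hrot]
  simp [relatorWord, relatorEquiv]

theorem posArr_eq_posLv_invLetter (s : Letter g) : posArr s = posLv (invLetter s) := by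
  obtain ⟨ℓ, _ | _⟩ := s <;> rfl

theorem posLv_lt (s : Letter g) : posLv s < 4 * g := by
  obtain ⟨⟨ℓ, hℓ⟩, _ | _⟩ := s <;> simp only [posLv, posOut, posIn] <;> split <;> split <;> omega

-- The turn at a vertex goes to the adjacent half-edge: this is how `nextLetter` encodes the
-- cyclic order of the half-edges.
theorem posLv_nextLetter_invLetter (s : Letter g) :
    posLv (nextLetter g (invLetter s)) = (posLv s + 1) % (4 * g) := by
  have hmod {p : ℕ} (hp : p < 4 * g) : (p + 1) % (4 * g) = if p + 1 = 4 * g then 0 else p + 1 := by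
    split_ifs with h
    · rw [h, Nat.mod_self]
    · exact Nat.mod_eq_of_lt (by omega)
  have h := relatorEquiv_symm_nextLetter (invLetter s)
  rw [hmod (Fin.is_lt _)] at h
  rw [hmod (posLv_lt s)]
  generalize nextLetter g (invLetter s) = t at h ⊢
  obtain ⟨⟨ℓ, hℓ⟩, b⟩ := s
  obtain ⟨⟨m, hm⟩, c⟩ := t
  cases b <;> cases c <;>
    simp only [relatorEquiv, invLetter, posLv, posOut, posIn, Equiv.coe_fn_symm_mk, Bool.not_true,
      Bool.not_false, Bool.false_eq_true, if_true, if_false] at h ⊢ <;>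
    split_ifs at h ⊢ <;> omega

theorem gapN_nextLetter (s : Letter g) : gapN s (nextLetter g s) = 0 := by
  have h := posLv_nextLetter_invLetter (invLetter s)
  rw [← posArr_eq_posLv_invLetter, show invLetter (invLetter s) = s by simp [invLetter]] at h
  have hlt : posArr s < 4 * g := posArr_eq_posLv_invLetter s ▸ posLv_lt _
  rw [gapN, h]
  obtain hlt | heq : posArr s + 1 < 4 * g ∨ posArr s + 1 = 4 * g := by omega
  · rw [Nat.mod_eq_of_lt hlt, Nat.add_sub_cancel_left, Nat.mod_self]
  · rw [heq, Nat.mod_self, zero_add, Nat.sub_self, Nat.zero_mod]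

/-- The polygon system of `Σ_g`: the polygon is the `4g`-gon reading the relator. -/
def surfaceSystem (hg : 2 ≤ g) : PolygonSystem (Letter g) where
  next := nextLetter g
  inv := invLetter
  half := 2 * g
  inv_inv s := by simp [invLetter]
  three_le_half := by omega
  next_pow := by rw [← mul_assoc]; exact nextLetter_pow (by omega)
  turn_iterate_ne s k hk hk4 h := by
    have hpos : ∀ k, posLv ((fun t => nextLetter g (invLetter t))^[k] s) =
        (posLv s + k) % (4 * g) := fun k => by
      induction k with
      | zero => exact (Nat.mod_eq_of_lt (posLv_lt s)).symm
      | succ k ih =>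
        rw [Function.iterate_succ_apply', posLv_nextLetter_invLetter, ih, Nat.mod_add_mod,
          add_assoc]
    have hs := hpos k
    rw [h] at hs
    have hdvd : 4 * g ∣ k := (Nat.modEq_zero_iff_dvd).1 <| Nat.ModEq.add_left_cancel' (posLv s) <|
      hs.symm.trans (Nat.mod_eq_of_lt (posLv_lt s)).symm
    exact absurd (Nat.le_of_dvd hk hdvd) (by omega)

end Letters

/-! ### Tilings and actions of the surface group -/

namespace PolygonSystem.IsTiling

variable {g : ℕ} {hg : 2 ≤ g} {W : Type*} {T : W → Letter g → W → Prop}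
  {π : Fin (2 * g) → Equiv.Perm W} (hT : (surfaceSystem hg).IsTiling T)
include hT

theorem exists_perm :
    ∃ π : Fin (2 * g) → Equiv.Perm W, ∀ x ℓ y, T x (ℓ, true) y → π ℓ y = x := by
  choose f hf using hT.total
  have hcancel (b : Bool) (ℓ : Fin (2 * g)) (x : W) : f (f x (ℓ, b)) (ℓ, !b) = x :=
    hT.det _ _ _ _ (hf _ _) (hT.symm _ _ _ (hf x (ℓ, b)))
  exact ⟨fun ℓ => ⟨(f · (ℓ, false)), (f · (ℓ, true)), hcancel false ℓ, hcancel true ℓ⟩,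
    fun x ℓ y h => hT.det _ _ _ _ (hf _ _) (hT.symm _ _ _ h)⟩

theorem lift_letter_apply (hπ : ∀ x ℓ y, T x (ℓ, true) y → π ℓ y = x) {x y : W}
    {s : Letter g} (h : T x s y) :
    FreeGroup.lift π (if s.2 then FreeGroup.of s.1 else (FreeGroup.of s.1)⁻¹) y = x := by
  obtain ⟨ℓ, _ | _⟩ := s
  · simpa [Equiv.symm_apply_eq] using (hπ _ _ _ (hT.symm _ _ _ h)).symm
  · simpa using hπ _ _ _ h

theorem lift_relatorF (hπ : ∀ x ℓ y, T x (ℓ, true) y → π ℓ y = x) :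
    FreeGroup.lift π (relatorF g) = 1 := by
  have hword {n : ℕ} : ∀ {c d : W × Letter g}, Steps ((surfaceSystem hg).Step T) n c d →
      FreeGroup.lift π (((List.iterate (nextLetter g) c.2 n).map fun s =>
        if s.2 then FreeGroup.of s.1 else (FreeGroup.of s.1)⁻¹).prod) d.1 = c.1 := by
    induction n with
    | zero =>
      rintro c _ rfl
      simp
    | succ n ih =>
      rintro c d ⟨e, ⟨hce, he⟩, hed⟩
      have hed := ih hed
      rw [he] at hed
      rw [List.iterate, List.map_cons, List.prod_cons, map_mul, Equiv.Perm.mul_apply]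
      exact (congrArg _ hed).trans (hT.lift_letter_apply hπ hce)
  obtain ⟨s, hs⟩ := relatorWord_eq_iterate (g := g) (by omega)
  ext x
  rw [relatorF, hs, show 4 * g = 2 * (2 * g) by omega]
  exact hword (hT.onFace (x, s))

theorem exists_mulAction :
    ∃ _ : MulAction (Gamma g) W,
      ∀ x ℓ y, T x (ℓ, true) y → (PresentedGroup.of ℓ : Gamma g) • y = x := by
  obtain ⟨π, hπ⟩ := hT.exists_perm
  have hrel : ∀ r ∈ ({relatorF g} : Set _), FreeGroup.lift π r = 1 := by
    rintro _ rfl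
    exact hT.lift_relatorF hπ
  refine ⟨MulAction.compHom W (PresentedGroup.toGroup hrel), fun x ℓ y h => ?_⟩
  exact (congrArg (· y) (PresentedGroup.toGroup.of hrel)).trans (hπ x ℓ y h)

end PolygonSystem.IsTiling

/-! ### Complexes mapping to a set with an action of the surface group -/

section DevelopingMap

variable {g : ℕ} {W : Type} [MulAction (Gamma g) W] {Y : Complex g} {m : Y.V → W}

theorem wordG_cons (s : Letter g) (w : List (Letter g)) :
    wordG (s :: w) = letterG s * wordG w := by
  rw [wordG, List.map_cons, List.prod_cons, wordG]

theorem wordG_relatorWord : wordG (relatorWord g) = 1 := by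
  have hmk (w : List (Letter g)) : wordG w = PresentedGroup.mk {relatorF g}
      (w.map fun s => if s.2 then FreeGroup.of s.1 else (FreeGroup.of s.1)⁻¹).prod := by
    rw [map_list_prod, List.map_map, wordG]
    congr 2
    ext s
    rw [Function.comp_apply, letterG, apply_ite (PresentedGroup.mk _), map_inv]
    rfl
  exact (hmk _).trans (PresentedGroup.one_of_mem (Set.mem_singleton _))

/-- A developing map: a map from the vertices of `Y` to a `Γ_g`-set under which the endpoints of
every edge differ by the generator labelling that edge. The generator of an edge carries its
terminal vertex to its initial vertex, so that the group element of a walk does the same. -/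
def Complex.IsDevelopingMap (Y : Complex g) (m : Y.V → W) : Prop :=
  ∀ e, (PresentedGroup.of (Y.lab e) : Gamma g) • m (Y.dst e) = m (Y.src e)

namespace Complex.IsDevelopingMap

theorem letterG_smul (hm : Y.IsDevelopingMap m) (d : Y.D) :
    letterG (Y.dLet d) • m (Y.dHead d) = m (Y.dTail d) := by
  obtain ⟨e, _ | _⟩ := d
  · exact inv_smul_eq_iff.2 (hm e).symm
  · exact hm e

theorem wordG_smul (hm : Y.IsDevelopingMap m) {u v : Y.V} {l : List Y.D} (h : Y.WalkFrom u v l) :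
    wordG (Y.wordOf l) • m v = m u := by
  induction h with
  | nil => exact one_smul _ _
  | cons d _ ih =>
    rw [wordOf, List.map_cons, wordG_cons, mul_smul]
    exact (congrArg _ ih).trans (hm.letterG_smul d)

theorem p2 (hm : Y.IsDevelopingMap m) (hinj : Function.Injective m) : Y.P2 :=
  fun _ _ _ h hw => hinj (by rw [← hm.wordG_smul h, hw, one_smul])

end Complex.IsDevelopingMap

/-- The dart with letter `s` leaving `x` in the Schreier graph of `W`: an edge of this graph is
given by its terminal vertex and its label. -/
def actionDart (x : W) (s : Letter g) : (W × Fin (2 * g)) × Bool :=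
  ((if s.2 then (PresentedGroup.of s.1 : Gamma g)⁻¹ • x else x, s.1), s.2)

/-- The walk from `x` reading the given word in the Schreier graph of `W`. -/
def actionWalk : W → List (Letter g) → List ((W × Fin (2 * g)) × Bool)
  | _, [] => []
  | x, s :: w => actionDart x s :: actionWalk ((letterG s)⁻¹ • x) w

variable (g W) in
/-- The covering of `Σ_g` with vertex set the `Γ_g`-set `W`: the Schreier graph of `W`, with one
polygon glued along the relator walk from each vertex. -/
abbrev actionComplex : Complex g where
  V := W
  E := W × Fin (2 * g)
  F := W
  src e := (PresentedGroup.of e.2 : Gamma g) • e.1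
  dst e := e.1
  lab e := e.2
  bdry x := actionWalk x (relatorWord g)

theorem isDevelopingMap_id : (actionComplex g W).IsDevelopingMap (W := W) id := fun _ => rfl

theorem dTail_actionDart (x : W) (s : Letter g) :
    (actionComplex g W).dTail (actionDart x s) = x := by
  obtain ⟨ℓ, _ | _⟩ := s
  · rfl
  · exact smul_inv_smul _ _

theorem dHead_actionDart (x : W) (s : Letter g) :
    (actionComplex g W).dHead (actionDart x s) = (letterG s)⁻¹ • x := by
  obtain ⟨ℓ, _ | _⟩ := s
  · exact congrArg (· • x) (inv_inv _).symm
  · rfl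

theorem walkFrom_actionWalk (x : W) (w : List (Letter g)) :
    (actionComplex g W).WalkFrom x ((wordG w)⁻¹ • x) (actionWalk x w) := by
  induction w generalizing x with
  | nil => simpa [wordG, actionWalk] using Complex.WalkFrom.nil (Y := actionComplex g W) x
  | cons s w ih =>
    have h := ih ((letterG s)⁻¹ • x)
    rw [smul_smul, ← mul_inv_rev, ← wordG_cons, ← dHead_actionDart] at h
    simpa only [dTail_actionDart, dHead_actionDart, actionWalk] using h.cons

theorem wordOf_actionWalk (x : W) (w : List (Letter g)) :
    (actionComplex g W).wordOf (actionWalk x w) = w := by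
  induction w generalizing x with
  | nil => rfl
  | cons s w ih => exact congrArg (s :: ·) (ih _)

theorem Complex.IsDevelopingMap.map_walk (hm : Y.IsDevelopingMap m) {u v : Y.V} {l : List Y.D}
    (h : Y.WalkFrom u v l) :
    l.map (fun d => ((m (Y.dst d.1), Y.lab d.1), d.2)) = actionWalk (m u) (Y.wordOf l) := by
  induction h with
  | nil => rfl
  | cons d _ ih =>
    have hhead : (letterG (Y.dLet d))⁻¹ • m (Y.dTail d) = m (Y.dHead d) :=
      inv_smul_eq_iff.2 (hm.letterG_smul d).symm
    have hdart : ((m (Y.dst d.1), Y.lab d.1), d.2) = actionDart (m (Y.dTail d)) (Y.dLet d) := by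
      obtain ⟨e, _ | _⟩ := d
      · rfl
      · exact congrArg (fun x => ((x, Y.lab e), true)) (eq_inv_smul_iff.2 (hm e))
    rw [List.map_cons, ih, hdart, ← hhead]
    rfl

theorem actionWalk_injective (hg : g ≠ 0) :
    Function.Injective fun x : W => actionWalk x (relatorWord g) := by
  intro x y h
  have hne : relatorWord g ≠ [] := by simp [relatorWord, hg]
  obtain ⟨s, w, hw⟩ := List.exists_cons_of_ne_nil hne
  simp only [hw, actionWalk, List.cons.injEq] at h
  rw [← dTail_actionDart x s, h.1, dTail_actionDart]

theorem isCovering_actionComplex (hg : g ≠ 0) : (actionComplex g W).IsCovering := by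
  refine ⟨⟨?_, ?_⟩, ⟨fun (x : W) => ⟨⟨x, ?_⟩, wordOf_actionWalk x _⟩, actionWalk_injective hg⟩,
    fun (x : W) ℓ => ?_, fun x ℓ => ⟨(x, ℓ), rfl, rfl⟩, fun u v l h hw => ?_,
    fun v l h hw => ⟨v, ?_⟩⟩
  · rintro ⟨x, ℓ⟩ ⟨x', _⟩ hsrc rfl
    exact Prod.ext (smul_left_cancel (PresentedGroup.of ℓ : Gamma g) hsrc) rfl
  · rintro ⟨x, ℓ⟩ ⟨x', _⟩ hdst rfl
    exact Prod.ext hdst rfl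
  · simpa [wordG_relatorWord] using walkFrom_actionWalk x (relatorWord g)
  · exact ⟨((PresentedGroup.of ℓ : Gamma g)⁻¹ • x, ℓ), smul_inv_smul _ _, rfl⟩
  · simpa [hw, wordG_relatorWord] using (isDevelopingMap_id.wordG_smul h).symm
  · have := (isDevelopingMap_id.map_walk h).symm
    rw [hw] at this
    exact this.trans (List.map_id l)

theorem Complex.IsDevelopingMap.isTiledSurface (hg : g ≠ 0) (hm : Y.IsDevelopingMap m)
    (hinj : Function.Injective m) (h1 : Y.P1) (h3 : Y.P3) : Y.IsTiledSurface := by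
  choose base hbase using fun f => (h3.1 f).1
  have hbdry (f : Y.F) : (Y.bdry f).map (fun d => ((m (Y.dst d.1), Y.lab d.1), d.2)) =
      actionWalk (m (base f)) (relatorWord g) := (h3.1 f).2 ▸ hm.map_walk (hbase f)
  have hE : Function.Injective fun e => (m (Y.dst e), Y.lab e) := fun e e' h =>
    h1.2 e e' (hinj (Prod.ext_iff.1 h).1) (Prod.ext_iff.1 h).2
  refine ⟨actionComplex g W, isCovering_actionComplex hg,
    ⟨m, fun e => (m (Y.dst e), Y.lab e), fun f => m (base f), hm, fun _ => rfl, fun _ => rfl,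
      fun f => (hbdry f).symm⟩, hinj, hE, fun f f' h => h3.2 ?_⟩
  refine (hE.prodMap Function.injective_id).list_map ?_
  exact ((hbdry f).trans (congrArg (actionWalk · (relatorWord g)) h)).trans (hbdry f').symm

end DevelopingMap

/-! ### The partial tiling of a complex without long blocks on its boundary -/

section Complex

variable {g : ℕ} {hg : 2 ≤ g} {Y : Complex g} {u v : Y.V} {l : List Y.D} {s : Letter g} {n : ℕ}

namespace Complex

/-- The labeled graph of `Y`: a dart with letter `s` leads from `u` to `v`. -/
def HasDart (Y : Complex g) (u : Y.V) (s : Letter g) (v : Y.V) : Prop :=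
  ∃ d : Y.D, Y.dTail d = u ∧ Y.dHead d = v ∧ Y.dLet d = s

theorem HasDart.symm (h : Y.HasDart u s v) : Y.HasDart v (invLetter s) u := by
  obtain ⟨⟨e, b⟩, rfl, rfl, rfl⟩ := h
  refine ⟨(e, !b), ?_, ?_, rfl⟩ <;> cases b <;> rfl

theorem P1.hasDart_det (h1 : Y.P1) {w : Y.V} (h : Y.HasDart u s v) (h' : Y.HasDart u s w) :
    v = w := by
  obtain ⟨⟨e, b⟩, rfl, rfl, rfl⟩ := h
  obtain ⟨⟨e', b'⟩, htail, rfl, hlet⟩ := h'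
  obtain ⟨hlab, rfl⟩ := Prod.mk.inj hlet
  cases b'
  · rw [h1.2 e' e htail hlab]
  · rw [h1.1 e' e htail hlab]

theorem exists_walk_of_steps {c c' : Y.V × Letter g}
    (h : Steps ((surfaceSystem hg).Step Y.HasDart) n c c') :
    ∃ l, Y.WalkFrom c.1 c'.1 l ∧ Y.wordOf l = List.iterate (nextLetter g) c.2 n := by
  induction n generalizing c with
  | zero =>
    obtain rfl := h
    exact ⟨[], .nil _, rfl⟩
  | succ n ih =>
    obtain ⟨⟨w, t⟩, ⟨⟨d, hd, rfl, hlet⟩, rfl⟩, hsteps⟩ := h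
    obtain ⟨l, hl, hw⟩ := ih hsteps
    refine ⟨d :: l, hd ▸ .cons d hl, ?_⟩
    rw [wordOf, List.map_cons, hlet, List.iterate]
    exact congrArg _ hw

namespace WalkFrom

theorem steps (h : Y.WalkFrom u v l) (hw : Y.wordOf l = List.iterate (nextLetter g) s n) :
    Steps ((surfaceSystem hg).Step Y.HasDart) n (u, s) (v, (nextLetter g ^ n) s) := by
  induction h generalizing s n with
  | nil =>
    cases n with
    | zero => rfl
    | succ n => simp [wordOf] at hw
  | cons d _ ih =>
    cases n with
    | zero => simp [wordOf] at hw
    | succ n =>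
      obtain ⟨rfl, hw⟩ := List.cons.inj hw
      exact ⟨(Y.dHead d, nextLetter g (Y.dLet d)), ⟨⟨d, rfl, rfl, rfl⟩, rfl⟩, ih hw⟩

theorem exists_steps_of_mem (h : Y.WalkFrom u v l)
    (hw : Y.wordOf l = List.iterate (nextLetter g) s n) {d : Y.D} (hd : d ∈ l) :
    ∃ k, Steps ((surfaceSystem hg).Step Y.HasDart) k (u, s) (Y.dTail d, Y.dLet d) := by
  induction h generalizing s n with
  | nil => simp at hd
  | cons d' _ ih =>
    cases n with
    | zero => simp [wordOf] at hw
    | succ n =>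
      obtain ⟨rfl, hw⟩ := List.cons.inj hw
      obtain rfl | hd := List.mem_cons.1 hd
      · exact ⟨0, rfl⟩
      · obtain ⟨k, hk⟩ := ih hw hd
        exact ⟨k + 1, (Y.dHead d', nextLetter g (Y.dLet d')), ⟨⟨d', rfl, rfl, rfl⟩, rfl⟩, hk⟩

theorem isChain (h : Y.WalkFrom u v l) (hw : Y.wordOf l = List.iterate (nextLetter g) s n) :
    l.IsChain fun d d' => Y.adj d d' ∧ gapN (Y.dLet d) (Y.dLet d') = 0 := by
  induction h generalizing s n with
  | nil => exact .nil
  | @cons d v l h ih =>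
    cases n with
    | zero => simp [wordOf] at hw
    | succ n =>
      obtain ⟨rfl, hw⟩ := List.cons.inj hw
      refine List.isChain_cons.2 ⟨fun d' hd' => ?_, ih hw⟩
      obtain ⟨l, rfl⟩ := List.head?_eq_some_iff.1 hd'
      cases n with
      | zero => simp at hw
      | succ n =>
        have hlet : Y.dLet d' = nextLetter g (Y.dLet d) := (List.cons.inj hw).1
        refine ⟨?_, by rw [hlet, gapN_nextLetter]⟩
        generalize hu : Y.dHead d = u at h
        cases h
        exact hu

end WalkFrom

theorem bPath_of_isChain (hne : l ≠ []) (hf : ∀ d ∈ l, ∀ f, d ∉ Y.bdry f)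
    (h : l.IsChain fun d d' => Y.adj d d' ∧ gapN (Y.dLet d) (Y.dLet d') = 0) :
    Y.BPath Set.univ Set.univ l := by
  refine ⟨hne, fun _ _ => Set.mem_univ _, h.imp_of_mem_imp fun d d' hd _ ⟨hadj, hgap⟩ => ?_⟩
  refine ⟨Set.mem_univ _, ⟨Set.mem_univ _, hadj, fun _ _ _ => hgap ▸ Nat.zero_le _⟩, ?_⟩
  rintro ⟨f, -, hinfix⟩
  have hmem : d ∈ Y.bdry f ++ Y.bdry f := hinfix.subset List.mem_cons_self
  exact hf d hd f (by simpa using hmem)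

theorem P1.biUnique_step (h1 : Y.P1) :
    Relator.BiUnique ((surfaceSystem hg).Step Y.HasDart) :=
  PolygonSystem.step_biUnique (fun _ _ _ => HasDart.symm) fun _ _ _ _ => h1.hasDart_det

theorem P3.onFace_of_mem_bdry (h3 : Y.P3) (h1 : Y.P1) {f : Y.F} {d : Y.D} (hd : d ∈ Y.bdry f) :
    (surfaceSystem hg).OnFace Y.HasDart (Y.dTail d, Y.dLet d) := by
  obtain ⟨⟨v, hv⟩, hw⟩ := h3.1 f
  obtain ⟨s, hs⟩ := relatorWord_eq_iterate (g := g) (by omega)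
  rw [hs] at hw
  have hface : (surfaceSystem hg).OnFace Y.HasDart (v, s) := by
    have hsteps := hv.steps (hg := hg) hw
    rw [nextLetter_pow (by omega)] at hsteps
    rwa [PolygonSystem.OnFace, show 2 * (surfaceSystem hg).half = 4 * g from (mul_assoc 2 2 g).symm]
  obtain ⟨k, hk⟩ := hv.exists_steps_of_mem (hg := hg) hw hd
  exact (hk.closed_iff h1.biUnique_step).1 hface

theorem isPartialTiling_hasDart (hg : 2 ≤ g) (h1 : Y.P1) (h3 : Y.P3)
    (hlb : ∀ l, Y.BPath Set.univ Set.univ l → ¬ (Y.IsBlock l ∧ 2 * g + 1 ≤ l.length)) :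
    (surfaceSystem hg).IsPartialTiling Y.HasDart where
  symm _ _ _ := HasDart.symm
  det _ _ _ _ := h1.hasDart_det
  closes c c' h := by
    obtain ⟨l, hl, hw⟩ := exists_walk_of_steps h
    have hlen : l.length = 2 * g + 1 := by
      simpa [wordOf, surfaceSystem] using congrArg List.length hw
    have hne : l ≠ [] := List.ne_nil_of_length_pos (by omega)
    by_cases hf : ∀ d ∈ l, ∀ f, d ∉ Y.bdry f
    · have hchain := hl.isChain hw
      exact absurd ⟨⟨hne, by omega, hchain⟩, hlen.ge⟩ (hlb l (bPath_of_isChain hne hf hchain))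
    · push Not at hf
      obtain ⟨d, hd, f, hdf⟩ := hf
      obtain ⟨k, hk⟩ := hl.exists_steps_of_mem (hg := hg) hw hd
      exact (hk.closed_iff h1.biUnique_step).2 (h3.onFace_of_mem_bdry h1 hdf)

end Complex

end Complex

theorem statement_2_general (g : ℕ) (hg : 2 ≤ g) (Y : Complex g) (h1 : Y.P1) (h3 : Y.P3)
    (hlb : ∀ l, Y.BPath Set.univ Set.univ l → ¬ (Y.IsBlock l ∧ 2 * g + 1 ≤ l.length)) :
    Y.P2 ∧ Y.IsTiledSurface := by
  obtain ⟨T, hT, hbase⟩ := (Complex.isPartialTiling_hasDart hg h1 h3 hlb).exists_isTiling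
  obtain ⟨_, hact⟩ := hT.exists_mulAction
  have hdev : Y.IsDevelopingMap PolygonSystem.Vertex.base := fun e =>
    hact _ _ _ (hbase _ _ _ ⟨(e, true), rfl, rfl, rfl⟩)
  have hinj : Function.Injective (PolygonSystem.Vertex.base (V := Y.V) (L := Letter g)) :=
    fun _ _ => PolygonSystem.Vertex.base.inj
  exact ⟨hdev.p2 hinj, hdev.isTiledSurface (by omega) hinj h1 h3⟩

/-- If a complex `Y` with directed labeled edges satisfies
**P1** and **P3**, and its (combinatorially defined) thick version is boundary
reduced, then `Y` also satisfies **P2** and hence is a tiled surface. -/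
theorem statement_2 (g : ℕ) (hg : 2 ≤ g) (Y : Complex g) (h1 : Y.P1) (h3 : Y.P3)
    (hbr : Y.BoundaryReduced Set.univ Set.univ) :
    Y.P2 ∧ Y.IsTiledSurface :=
  statement_2_general g hg Y h1 h3 hbr.1

end CS

end
end
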